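/- arXiv:2202.07900 — 7 statements merged into one kernel-verified Lean document; each statement's English description precedes it below -/
import Mathlib

section
/- Let R be an associative ring with unity. The class of semisimple left R-modules is λ-categorical in all cardinals λ > card(R) + ℵ₀ if and only if it is λ-categorical in some cardinal λ > card(R) + ℵ₀. -/
/-! Statement 1: for the class of semisimple left `R`-modules, categoricity in all
cardinals `> card R + ℵ₀` is equivalent to categoricity in some cardinal `> card R + ℵ₀`. -/

universe u

open Cardinal

/-- A class `K` of left `R`-modules is `c`-categorical if it contains a module of
cardinality `c` and any two modules in `K` of cardinality `c` are isomorphic. -/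
def Categorical (R : Type u) [Ring R] (K : ModuleCat.{u} R → Prop) (c : Cardinal.{u}) : Prop :=
  (∃ M : ModuleCat.{u} R, K M ∧ #M = c) ∧
    ∀ M N : ModuleCat.{u} R, K M → K N → #M = c → #N = c → Nonempty (M ≃ₗ[R] N)

/-- `R` has exactly one simple module up to isomorphism. This property, which mentions no cardinal,
is what categoricity of the semisimple modules in a single large cardinal amounts to. Restricting to
modules in the universe of `R` loses nothing, as every simple module is a quotient of `R`. -/
def HasUniqueSimpleModule (R : Type u) [Ring R] : Prop :=
  ∃ S : ModuleCat.{u} R, IsSimpleModule R S ∧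
    ∀ T : ModuleCat.{u} R, IsSimpleModule R T → Nonempty (T ≃ₗ[R] S)

theorem mk_finsupp_eq_iff_mk_eq {ι α : Type u} [Zero α] [Nontrivial α] {c : Cardinal.{u}}
    (hα : #α < c) (hc : ℵ₀ ≤ c) : #(ι →₀ α) = c ↔ #ι = c := by
  cases fintypeOrInfinite ι
  · have hι : #ι < c := (lt_aleph0_of_finite ι).trans_le hc
    have hfinsupp : #(ι →₀ α) < c := by
      rw [mk_finsupp_of_fintype]
      rcases lt_or_ge #α ℵ₀ with hfin | hinf
      · exact (power_lt_aleph0 hfin natCast_lt_aleph0).trans_le hc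
      · exact (power_nat_le hinf).trans_lt hα
    exact iff_of_false hfinsupp.ne hι.ne
  · rw [mk_finsupp_of_infinite]
    grind

section SimpleModules

variable {R : Type*} [Ring R]

theorem nonempty_linearEquiv_of_ne_zero_finsupp {S T κ : Type*} [AddCommGroup S] [Module R S]
    [IsSimpleModule R S] [AddCommGroup T] [Module R T] [IsSimpleModule R T]
    {f : S →ₗ[R] κ →₀ T} (hf : f ≠ 0) : Nonempty (S ≃ₗ[R] T) := by
  obtain ⟨k, hk⟩ : ∃ k, Finsupp.lapply k ∘ₗ f ≠ 0 := by
    contrapose! hf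
    ext s k
    exact LinearMap.congr_fun (hf k) s
  exact ⟨.ofBijective _ (LinearMap.bijective_of_ne_zero hk)⟩

theorem nonempty_linearEquiv_of_finsupp_linearEquiv {S T ι κ : Type*} [Nonempty ι]
    [AddCommGroup S] [Module R S] [IsSimpleModule R S]
    [AddCommGroup T] [Module R T] [IsSimpleModule R T]
    (e : (ι →₀ S) ≃ₗ[R] (κ →₀ T)) : Nonempty (S ≃ₗ[R] T) := by
  have := IsSimpleModule.nontrivial R S
  obtain ⟨i⟩ := ‹Nonempty ι›
  have hinj : Function.Injective (e.toLinearMap ∘ₗ Finsupp.lsingle i) :=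
    e.injective.comp (Finsupp.single_injective i)
  exact nonempty_linearEquiv_of_ne_zero_finsupp (LinearMap.ne_zero_of_injective hinj)

theorem nonempty_linearEquiv_of_isIsotypicOfType {M N S : Type u} [AddCommGroup M] [Module R M]
    [IsSemisimpleModule R M] [AddCommGroup N] [Module R N] [IsSemisimpleModule R N]
    [AddCommGroup S] [Module R S] [Nontrivial S]
    (hM : IsIsotypicOfType R M S) (hN : IsIsotypicOfType R N S)
    (hSM : #S < #M) (hM_inf : ℵ₀ ≤ #M) (hMN : #M = #N) : Nonempty (M ≃ₗ[R] N) := by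
  obtain ⟨ι, ⟨eM⟩⟩ := hM.linearEquiv_finsupp
  obtain ⟨κ, ⟨eN⟩⟩ := hN.linearEquiv_finsupp
  have hι : #ι = #M := (mk_finsupp_eq_iff_mk_eq hSM hM_inf).mp eM.toEquiv.cardinal_eq.symm
  have hκ : #κ = #M :=
    (mk_finsupp_eq_iff_mk_eq hSM hM_inf).mp (hMN.trans eN.toEquiv.cardinal_eq).symm
  obtain ⟨g⟩ := Cardinal.eq.mp (hι.trans hκ.symm)
  exact ⟨eM ≪≫ₗ Finsupp.domLCongr g ≪≫ₗ eN.symm⟩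

end SimpleModules

section Categoricity

variable {R : Type u} [Ring R]

theorem mk_le_mk_of_isSimpleModule (S : Type u) [AddCommGroup S] [Module R S]
    [IsSimpleModule R S] : #S ≤ #R := by
  have := IsSimpleModule.nontrivial R S
  obtain ⟨s, hs⟩ := exists_ne (0 : S)
  exact mk_le_of_surjective (IsSimpleModule.toSpanSingleton_surjective R hs)

theorem mk_out_finsupp_of_isSimpleModule (S : Type u) [AddCommGroup S] [Module R S]
    [IsSimpleModule R S] {c : Cardinal.{u}} (hRc : #R < c) (hc : ℵ₀ ≤ c) :
    #(c.out →₀ S) = c :=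
  have := IsSimpleModule.nontrivial R S
  (mk_finsupp_eq_iff_mk_eq ((mk_le_mk_of_isSimpleModule S).trans_lt hRc) hc).mpr c.mk_out

theorem HasUniqueSimpleModule.categorical_isSemisimpleModule (hR : HasUniqueSimpleModule R)
    {c : Cardinal.{u}} (hRc : #R < c) (hc : ℵ₀ ≤ c) :
    Categorical R (fun M => IsSemisimpleModule R M) c := by
  obtain ⟨S, hS, hunique⟩ := hR
  have := IsSimpleModule.nontrivial R S
  have isotypic (M : ModuleCat.{u} R) : IsIsotypicOfType R M S := fun m hm => hunique (.of R m) hm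
  refine ⟨⟨.of R (c.out →₀ S), inferInstanceAs (IsSemisimpleModule R (c.out →₀ S)),
    mk_out_finsupp_of_isSimpleModule S hRc hc⟩, fun M N hM hN hMc hNc => ?_⟩
  have : IsSemisimpleModule R M := hM
  have : IsSemisimpleModule R N := hN
  have hSM : #S < #M := (mk_le_mk_of_isSimpleModule S).trans_lt (hRc.trans_eq hMc.symm)
  exact nonempty_linearEquiv_of_isIsotypicOfType (isotypic M) (isotypic N) hSM
    (hc.trans_eq hMc.symm) (hMc.trans hNc.symm)

theorem hasUniqueSimpleModule_of_categorical_isSemisimpleModule {c : Cardinal.{u}}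
    (hRc : #R < c) (hc : ℵ₀ ≤ c) (h : Categorical R (fun M => IsSemisimpleModule R M) c) :
    HasUniqueSimpleModule R := by
  obtain ⟨⟨M, hM, hMc⟩, hiso⟩ := h
  have : IsSemisimpleModule R M := hM
  have : Nontrivial M := one_lt_iff_nontrivial.mp (hMc ▸ one_lt_aleph0.trans_le hc)
  obtain ⟨S, hS⟩ := IsSemisimpleModule.exists_simple_submodule R M
  refine ⟨.of R S, hS, fun T hT => ?_⟩
  have : Nonempty c.out := mk_ne_zero_iff.mp (c.mk_out.trans_ne (aleph0_pos.trans_le hc).ne')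
  obtain ⟨e⟩ := hiso (.of R (c.out →₀ T)) (.of R (c.out →₀ S))
    (inferInstanceAs (IsSemisimpleModule R (c.out →₀ T)))
    (inferInstanceAs (IsSemisimpleModule R (c.out →₀ S)))
    (mk_out_finsupp_of_isSimpleModule T hRc hc) (mk_out_finsupp_of_isSimpleModule S hRc hc)
  exact nonempty_linearEquiv_of_finsupp_linearEquiv e

theorem categorical_isSemisimpleModule_iff {c : Cardinal.{u}} (hRc : #R < c) (hc : ℵ₀ ≤ c) :
    Categorical R (fun M => IsSemisimpleModule R M) c ↔ HasUniqueSimpleModule R :=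
  ⟨hasUniqueSimpleModule_of_categorical_isSemisimpleModule hRc hc,
    fun h => h.categorical_isSemisimpleModule hRc hc⟩

theorem stmt1_general {c d : Cardinal.{u}} (hRc : #R < c) (hc : ℵ₀ ≤ c) (hRd : #R < d)
    (hd : ℵ₀ ≤ d) :
    Categorical R (fun M => IsSemisimpleModule R M) c ↔
      Categorical R (fun M => IsSemisimpleModule R M) d :=
  (categorical_isSemisimpleModule_iff hRc hc).trans (categorical_isSemisimpleModule_iff hRd hd).symm

end Categoricity

theorem stmt1 (R : Type u) [Ring R] :
    (∀ c : Cardinal.{u}, #R + ℵ₀ < c →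
      Categorical R (fun M => IsSemisimpleModule R M) c) ↔
    (∃ c : Cardinal.{u}, #R + ℵ₀ < c ∧
      Categorical R (fun M => IsSemisimpleModule R M) c) := by
  have bounds {c : Cardinal.{u}} (hc : #R + ℵ₀ < c) : #R < c ∧ ℵ₀ ≤ c :=
    ⟨(self_le_add_right _ _).trans_lt hc, (self_le_add_left _ _).trans hc.le⟩
  exact ⟨fun h => ⟨_, Order.lt_succ _, h _ (Order.lt_succ _)⟩, fun ⟨_, hc, h⟩ _ hd =>
    (stmt1_general (bounds hc).1 (bounds hc).2 (bounds hd).1 (bounds hd).2).mp h⟩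
end

section
/- Let R be an associative ring with unity. The class of Σ-injective left R-modules is λ-categorical in all cardinals λ > card(R) + ℵ₀ if and only if it is λ-categorical in some cardinal λ > card(R) + ℵ₀. -/
/-! Statement 2: for the class of Σ-injective left `R`-modules, categoricity in all
cardinals `> card R + ℵ₀` is equivalent to categoricity in some cardinal `> card R + ℵ₀`. -/

universe u

open Cardinal DirectSum

/-- A module `M` is Σ-injective if the direct sum of `I` copies of `M` is injective for
every index set `I`. -/
def SigmaInjective (R : Type u) [Ring R] (M : ModuleCat.{u} R) : Prop :=
  ∀ I : Type u, Module.Injective R (⨁ _ : I, (M : Type u))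

/-!
A Σ-injective module is a direct sum of indecomposable injective modules, each of cardinality at
most `κ = card R + ℵ₀`. Hence a Σ-injective module of cardinality `c > κ` has exactly `c` summands,
and categoricity in any single `c > κ` says precisely that all indecomposable Σ-injective modules
are isomorphic.

Both the decomposition and the bound on the summands rest on Faith's criterion: on a Σ-injective
module, every left ideal has the same annihilator as some finite subset of it. By Baer's criterion,
a submodule is then injective as soon as it contains a solution of every finite system `rᵢ • y = aᵢ`
over it that is solvable in the ambient module. This condition passes to directed unions and to
hulls of small cardinality.
-/

universe v

section Lattice

variable {α : Type*} [CompleteLattice α]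

lemma exists_le_maximal_disjoint [IsCompactlyGenerated α] {a b : α} (hab : Disjoint a b) :
    ∃ c, b ≤ c ∧ Maximal (Disjoint a) c :=
  zorn_le_nonempty₀ {c | Disjoint a c}
    (fun _ hc hchain _ _ ↦ ⟨_, hchain.directedOn.disjoint_sSup_right.2 hc, fun _ ↦ le_sSup⟩) b hab

lemma exists_maximal_sSupIndep [IsCompactlyGenerated α] (P : α → Prop) :
    ∃ S : Set α, Maximal (fun S ↦ sSupIndep S ∧ ∀ a ∈ S, P a) S :=
  zorn_subset {S | sSupIndep S ∧ ∀ a ∈ S, P a} fun c hc hchain ↦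
    ⟨⋃₀ c, ⟨iSupIndep_sUnion_of_directed hchain.directedOn fun _ hs ↦ (hc hs).1,
      fun _ ⟨_, hs, ha⟩ ↦ (hc hs).2 _ ha⟩, fun _ ↦ Set.subset_sUnion_of_mem⟩

lemma sSupIndep_insert_of_disjoint [IsModularLattice α] {S : Set α} {a : α} (hS : sSupIndep S)
    (ha : Disjoint a (sSup S)) : sSupIndep (insert a S) := by
  rintro b (rfl | hb)
  · exact ha.mono_right (sSup_le_sSup fun _ hc ↦ hc.1.resolve_left hc.2)
  · have hle : sSup (insert a S \ {b}) ≤ sSup (S \ {b}) ⊔ a := by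
      refine sSup_le ?_
      rintro c ⟨rfl | hc, hcb⟩
      exacts [le_sup_right, le_sup_of_le_left (le_sSup ⟨hc, hcb⟩)]
    have hle' : b ⊔ sSup (S \ {b}) ≤ sSup S := sup_le (le_sSup hb) (sSup_le_sSup Set.sdiff_subset)
    exact ((hS hb).disjoint_sup_right_of_disjoint_sup_left (ha.mono_right hle').symm).mono_right hle

end Lattice

section Injective

variable {R : Type u} [Ring R] {M N : Type v} [AddCommGroup M] [Module R M] [AddCommGroup N]
  [Module R N]

lemma injective_of_retract (hM : Module.Injective R M) (i : N →ₗ[R] M) (p : M →ₗ[R] N)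
    (hpi : ∀ x, p (i x) = x) : Module.Injective R N where
  out _ _ _ _ _ _ f hf g := by
    obtain ⟨k, hk⟩ := hM.out f hf (i ∘ₗ g)
    exact ⟨p ∘ₗ k, fun x ↦ by simp [hk, hpi]⟩

lemma injective_of_linearEquiv (hM : Module.Injective R M) (e : M ≃ₗ[R] N) : Module.Injective R N :=
  injective_of_retract hM e.symm.toLinearMap e.toLinearMap (by simp)

lemma injective_of_isCompl (hM : Module.Injective R M) {A B : Submodule R M} (hAB : IsCompl A B) :
    Module.Injective R A :=
  injective_of_retract hM A.subtype (A.projectionOnto B hAB) (by simp)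

lemma isCompl_sup_map_subtype {C D : Submodule R M} (hCD : IsCompl C D) {A B : Submodule R D}
    (hAB : IsCompl A B) : IsCompl (C ⊔ A.map D.subtype) (B.map D.subtype) := by
  refine (Submodule.disjoint_map D.subtype_injective
    hAB.disjoint).isCompl_sup_left_of_isCompl_sup_right ?_
  rwa [← Submodule.map_sup, hAB.sup_eq_top, Submodule.map_top, Submodule.range_subtype]

lemma exists_retraction_of_injective {A : Submodule R M} (hA : Module.Injective R A) :
    ∃ p : M →ₗ[R] A, ∀ a : A, p a = a :=
  hA.out A.subtype A.subtype_injective LinearMap.id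

lemma exists_isCompl_of_injective {A : Submodule R M} (hA : Module.Injective R A) :
    ∃ B, IsCompl A B :=
  have ⟨_, hp⟩ := exists_retraction_of_injective hA
  ⟨_, LinearMap.isCompl_of_proj hp⟩

lemma injective_iff_exists_smul_eq [Small.{v} R] : Module.Injective R M ↔
    ∀ (J : Ideal R) (g : J →ₗ[R] M), ∃ y : M, ∀ r : J, (r : R) • y = g r := by
  rw [← Module.Baer.iff_injective]
  refine forall₂_congr fun J g ↦ ⟨fun ⟨g', hg'⟩ ↦ ⟨g' 1, fun r ↦ ?_⟩, fun ⟨y, hy⟩ ↦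
    ⟨LinearMap.toSpanSingleton R M y, fun r hr ↦ hy ⟨r, hr⟩⟩⟩
  rw [← map_smul, smul_eq_mul, mul_one, hg' r r.2]

lemma injective_of_maximal_disjoint (hM : Module.Injective R M) {A B : Submodule R M}
    (hA : Maximal (Disjoint B) A) (hB : Maximal (Disjoint A) B) : Module.Injective R A := by
  have hinj : Function.Injective (B.mkQ ∘ₗ A.subtype) := by
    rw [← LinearMap.ker_eq_bot, LinearMap.ker_comp, B.ker_mkQ]
    exact Submodule.disjoint_iff_comap_eq_bot.1 hA.prop.symm
  obtain ⟨h, hh⟩ := hM.out _ hinj A.subtype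
  let f : M →ₗ[R] M := h ∘ₗ B.mkQ
  have hfA : ∀ a ∈ A, f a = a := fun a ha ↦ hh ⟨a, ha⟩
  have hfB : ∀ b ∈ B, f b = 0 := fun b hb ↦ by simp [f, (Submodule.Quotient.mk_eq_zero B).2 hb]
  have hcomap : B.comap f ≤ B := hB.le_of_ge
    (Submodule.disjoint_def.2 fun a ha hfa ↦
      Submodule.disjoint_def.1 hB.prop a ha (by simpa [hfA a ha] using hfa))
    fun b hb ↦ by simp [hfB b hb]
  have hrange : LinearMap.range f ≤ A := by
    refine hA.le_of_ge (Submodule.disjoint_def.2 ?_) fun a ha ↦ ⟨a, hfA a ha⟩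
    rintro _ hb ⟨x, rfl⟩
    exact hfB x (hcomap hb)
  exact injective_of_retract hM A.subtype (f.codRestrict A fun x ↦ hrange ⟨x, rfl⟩)
    fun a ↦ Subtype.ext (hfA a a.2)

end Injective

section Indecomposable

variable {R : Type u} [Ring R] {M N : Type v} [AddCommGroup M] [Module R M] [AddCommGroup N]
  [Module R N]

/-- A module is indecomposable if it is nonzero and is not the direct sum of two nonzero
submodules. -/
def IsIndecomposable (R : Type u) [Ring R] (M : Type v) [AddCommGroup M] [Module R M] : Prop :=
  Nontrivial M ∧ ∀ A B : Submodule R M, IsCompl A B → A = ⊥ ∨ B = ⊥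

namespace IsIndecomposable

lemma of_linearEquiv (hM : IsIndecomposable R M) (e : M ≃ₗ[R] N) : IsIndecomposable R N := by
  refine ⟨have := hM.1; e.symm.toEquiv.nontrivial, fun A B hAB ↦ ?_⟩
  have hcompl := (Submodule.orderIsoMapComap e.symm).isCompl hAB
  simpa using hM.2 _ _ hcompl

lemma eq_bot_or_eq_top_of_injective (hM : IsIndecomposable R M) {A : Submodule R M}
    (hA : Module.Injective R A) : A = ⊥ ∨ A = ⊤ := by
  obtain ⟨B, hAB⟩ := exists_isCompl_of_injective hA
  rcases hM.2 A B hAB with hA | rfl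
  exacts [.inl hA, .inr (eq_top_of_isCompl_bot hAB)]

-- `InfIrred ⊥` says that the module is uniform: any two nonzero submodules meet nontrivially.
lemma infIrred_bot (hM : IsIndecomposable R M) (hinj : Module.Injective R M) :
    InfIrred (⊥ : Submodule R M) := by
  have := hM.1
  refine ⟨not_isMax_bot, fun A B hAB ↦ ?_⟩
  obtain ⟨B', hBB', hB'⟩ := exists_le_maximal_disjoint (disjoint_iff.2 hAB)
  obtain ⟨A', hAA', hA'⟩ := exists_le_maximal_disjoint hB'.prop.symm
  have hB'A' : Maximal (Disjoint A') B' :=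
    ⟨hA'.prop.symm, fun _ hC hle ↦ hB'.le_of_ge (hC.mono_left hAA') hle⟩
  have hA'inj := injective_of_maximal_disjoint hinj hA' hB'A'
  rcases hM.eq_bot_or_eq_top_of_injective hA'inj with rfl | rfl
  · exact .inl (le_bot_iff.1 hAA')
  · exact .inr (le_bot_iff.1 (hBB'.trans (disjoint_top.1 hA'.prop).le))

lemma nonempty_linearEquiv_of_injective (hM : IsIndecomposable R M) [Nontrivial N]
    (hN : Module.Injective R N) (f : N →ₗ[R] M) (hf : Function.Injective f) :
    Nonempty (N ≃ₗ[R] M) := by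
  have hrange := injective_of_linearEquiv hN (LinearEquiv.ofInjective f hf)
  rcases hM.eq_bot_or_eq_top_of_injective hrange with hbot | htop
  · obtain ⟨x, hx⟩ := exists_ne (0 : N)
    exact (hx (hf (by simp [LinearMap.range_eq_bot.1 hbot]))).elim
  · exact ⟨LinearEquiv.ofBijective f ⟨hf, LinearMap.range_eq_top.1 htop⟩⟩

end IsIndecomposable

lemma exists_injective_lapply_comp {M N ι : Type*} [AddCommGroup M] [Module R M] [AddCommGroup N]
    [Module R N] (hM : InfIrred (⊥ : Submodule R M)) (f : M →ₗ[R] ι →₀ N)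
    (hf : Function.Injective f) : ∃ k, Function.Injective (Finsupp.lapply (R := R) k ∘ₗ f) := by
  obtain ⟨x, -, hx⟩ := Submodule.exists_mem_ne_zero_of_ne_bot hM.ne_top.symm
  let K : ι → Submodule R M := fun k ↦ LinearMap.ker (Finsupp.lapply k ∘ₗ f)
  have hdisj : (f x).support.inf K ⊓ Submodule.span R {x} = ⊥ := by
    refine disjoint_iff.1 (Submodule.disjoint_def.2 fun y hyK hyx ↦ hf ?_)
    obtain ⟨r, rfl⟩ := Submodule.mem_span_singleton.1 hyx
    ext k
    by_cases hk : k ∈ (f x).support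
    · simpa [K] using Submodule.mem_finsetInf.1 hyK k hk
    · simp [Finsupp.notMem_support_iff.1 hk]
  have hspan : Submodule.span R {x} ≠ ⊥ := by simpa using hx
  obtain ⟨k, -, hk⟩ := hM.finset_inf_eq ((hM.2 hdisj).resolve_right hspan)
  exact ⟨k, LinearMap.ker_eq_bot.1 hk⟩

lemma IsIndecomposable.nonempty_linearEquiv_of_finsupp {ι : Type*} [Nonempty ι]
    (hM : IsIndecomposable R M) (hMinj : Module.Injective R M) (hN : IsIndecomposable R N)
    (e : (ι →₀ M) ≃ₗ[R] (ι →₀ N)) : Nonempty (M ≃ₗ[R] N) := by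
  classical
  have := hM.1
  let k : ι := Classical.arbitrary ι
  obtain ⟨l, hl⟩ := exists_injective_lapply_comp (hM.infIrred_bot hMinj)
    (e.toLinearMap ∘ₗ Finsupp.lsingle k) (e.injective.comp (Finsupp.single_injective k))
  exact hN.nonempty_linearEquiv_of_injective hMinj _ hl

end Indecomposable

section SigmaInjective

variable {R : Type u} [Ring R] {M N : Type v} [AddCommGroup M] [Module R M] [AddCommGroup N]
  [Module R N]

/-- The unbundled form of `SigmaInjective`, for modules in an arbitrary universe and with direct
sums of copies of `M` encoded as finitely supported functions. -/
def IsSigmaInjective (R : Type u) [Ring R] (M : Type v) [AddCommGroup M] [Module R M] : Prop :=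
  ∀ I : Type v, Module.Injective R (I →₀ M)

lemma sigmaInjective_iff (M : ModuleCat.{u} R) : SigmaInjective R M ↔ IsSigmaInjective R M := by
  classical
  exact forall_congr' fun I ↦
    ⟨fun h ↦ injective_of_linearEquiv h (finsuppLEquivDirectSum R M I).symm,
      fun h ↦ injective_of_linearEquiv h (finsuppLEquivDirectSum R M I)⟩

/-- Purity of a submodule `N` of `M` for systems in one unknown: a finite system of equations
`r • z = a`, `a ∈ N`, with a solution `y` in `M` has a solution in `N`. The right-hand sides
are encoded as `a = r • y`. -/
def IsUnivariatePure (N : Submodule R M) : Prop :=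
  ∀ (s : Finset R) (y : M), (∀ r ∈ s, r • y ∈ N) → ∃ z ∈ N, ∀ r ∈ s, r • z = r • y

namespace IsUnivariatePure

lemma of_injective {A : Submodule R M} (hA : Module.Injective R A) : IsUnivariatePure A := by
  obtain ⟨p, hp⟩ := exists_retraction_of_injective hA
  refine fun s y hy ↦ ⟨p y, (p y).2, fun r hr ↦ ?_⟩
  rw [← Submodule.coe_smul, ← map_smul]
  exact congrArg Subtype.val (hp ⟨r • y, hy r hr⟩)

lemma sSup_of_directedOn {S : Set (Submodule R M)} (hne : S.Nonempty)
    (hdir : DirectedOn (· ≤ ·) S) (hS : ∀ A ∈ S, IsUnivariatePure A) :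
    IsUnivariatePure (sSup S) := by
  classical
  intro s y hy
  have hcommon : ∃ A ∈ S, ∀ r ∈ s, r • y ∈ A := by
    induction s using Finset.induction_on with
    | empty => exact hne.imp fun A hA ↦ ⟨hA, by simp⟩
    | insert t s _ ih =>
      rw [Finset.forall_mem_insert] at hy
      obtain ⟨A, hA, hsA⟩ := ih hy.2
      obtain ⟨B, hB, htB⟩ := (Submodule.mem_sSup_of_directed hne hdir).1 hy.1
      obtain ⟨C, hC, hAC, hBC⟩ := hdir A hA B hB
      exact ⟨C, hC, (Finset.forall_mem_insert ..).2 ⟨hBC htB, fun r hr ↦ hAC (hsA r hr)⟩⟩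
  obtain ⟨A, hA, hsA⟩ := hcommon
  obtain ⟨z, hz, hzy⟩ := hS A hA s y hsA
  exact ⟨z, le_sSup hA hz, hzy⟩

end IsUnivariatePure

namespace IsSigmaInjective

lemma of_retract (hM : IsSigmaInjective R M) (i : N →ₗ[R] M) (p : M →ₗ[R] N)
    (hpi : ∀ x, p (i x) = x) : IsSigmaInjective R N := fun I ↦
  injective_of_retract (hM I) (Finsupp.mapRange.linearMap i) (Finsupp.mapRange.linearMap p)
    fun x ↦ by ext; simp [hpi]

lemma injective (hM : IsSigmaInjective R M) : Module.Injective R M :=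
  injective_of_retract (hM PUnit) (Finsupp.lsingle PUnit.unit) (Finsupp.lapply PUnit.unit) (by simp)

lemma finsupp (hM : IsSigmaInjective R M) (J : Type v) : IsSigmaInjective R (J →₀ M) := fun I ↦
  injective_of_linearEquiv (hM (I × J)) (Finsupp.curryLinearEquiv R)

lemma submodule (hM : IsSigmaInjective R M) {A : Submodule R M} (hA : Module.Injective R A) :
    IsSigmaInjective R A :=
  have ⟨p, hp⟩ := exists_retraction_of_injective hA
  hM.of_retract A.subtype p hp

lemma injective_iSup (hM : IsSigmaInjective R M) {ι : Type v} {p : ι → Submodule R M}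
    (hp : iSupIndep p) (hinj : ∀ i, Module.Injective R (p i)) :
    Module.Injective R (⨆ i, p i : Submodule R M) := by
  classical
  choose ρ hρ using fun i ↦ exists_retraction_of_injective (hinj i)
  have hcopies : Module.Injective R (Π₀ _ : ι, M) :=
    injective_of_linearEquiv (hM ι) (finsuppLequivDFinsupp R)
  have hsum : Module.Injective R (Π₀ i, p i) :=
    injective_of_retract hcopies (DFinsupp.mapRange.linearMap fun i ↦ (p i).subtype)
      (DFinsupp.mapRange.linearMap ρ) fun x ↦ by ext; simp [hρ]
  rw [Submodule.iSup_eq_range_dfinsupp_lsum]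
  exact injective_of_linearEquiv hsum (LinearEquiv.ofInjective _ hp.dfinsupp_lsum_injective)

-- On the ideal of all `s` with `s • m n = 0` for almost all `n`, the map `s ↦ (s • m n)ₙ` takes
-- values in `ℕ →₀ M`; by injectivity it is given by multiplication with a single `y : ℕ →₀ M`.
lemma exists_smul_eq_zero [Small.{v} R] (hM : IsSigmaInjective R M) (r : ℕ → R) (m : ℕ → M)
    (hrm : ∀ i j, i < j → r i • m j = 0) : ∃ n, r n • m n = 0 := by
  let incl : (ULift.{v} ℕ →₀ M) →ₗ[R] (ULift.{v} ℕ → M) := Finsupp.lcoeFun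
  let act : R →ₗ[R] (ULift.{v} ℕ → M) := LinearMap.toSpanSingleton R _ fun n ↦ m n.down
  let K : Ideal R := (LinearMap.range incl).comap act
  let g : K →ₗ[R] (ULift.{v} ℕ →₀ M) :=
    (LinearEquiv.ofInjective incl DFunLike.coe_injective).symm.toLinearMap ∘ₗ
      act.restrict fun _ h ↦ h
  have hg (s : K) (n : ULift ℕ) : g s n = (s : R) • m n.down :=
    congrFun (congrArg Subtype.val
      ((LinearEquiv.ofInjective incl DFunLike.coe_injective).apply_symm_apply _)) n
  have hrK (n : ℕ) : r n ∈ K := by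
    have hfin : (Function.support (act (r n))).Finite := by
      refine ((Set.finite_Iic n).preimage ULift.down_injective.injOn).subset fun j hj ↦ ?_
      exact not_lt.1 fun hnj ↦ hj (hrm n j.down hnj)
    exact ⟨Finsupp.ofSupportFinite _ hfin, rfl⟩
  obtain ⟨y, hy⟩ := injective_iff_exists_smul_eq.1 (hM (ULift ℕ)) K g
  obtain ⟨n, hn⟩ := Infinite.exists_notMem_finset y.support
  refine ⟨n.down, ?_⟩
  rw [← hg ⟨_, hrK n.down⟩, ← hy, Finsupp.smul_apply, Finsupp.notMem_support_iff.1 hn, smul_zero]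

lemma exists_finset_annihilating [Small.{v} R] (hM : IsSigmaInjective R M) (J : Ideal R) :
    ∃ s : Finset R, (∀ r ∈ s, r ∈ J) ∧
      ∀ m : M, (∀ r ∈ s, r • m = 0) → ∀ r ∈ J, r • m = 0 := by
  classical
  by_contra! hcon
  obtain ⟨f, hf, hlt⟩ := exists_seq_of_forall_finset_exists
    (fun p : R × M ↦ p.1 ∈ J ∧ p.1 • p.2 ≠ 0) (fun p q ↦ p.1 • q.2 = 0) fun s hs ↦ by
      obtain ⟨m, hm, r, hr, hrm⟩ := hcon (s.image Prod.fst)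
        (Finset.forall_mem_image.2 fun p hp ↦ (hs p hp).1)
      exact ⟨(r, m), ⟨hr, hrm⟩, fun p hp ↦ hm _ (Finset.mem_image_of_mem _ hp)⟩
  obtain ⟨n, hn⟩ := hM.exists_smul_eq_zero (fun n ↦ (f n).1) (fun n ↦ (f n).2) hlt
  exact (hf n).2 hn

lemma injective_iff_isUnivariatePure [Small.{v} R] (hM : IsSigmaInjective R M)
    {A : Submodule R M} : Module.Injective R A ↔ IsUnivariatePure A := by
  refine ⟨.of_injective, fun hA ↦ injective_iff_exists_smul_eq.2 fun J g ↦ ?_⟩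
  obtain ⟨y, hy⟩ := injective_iff_exists_smul_eq.1 hM.injective J (A.subtype ∘ₗ g)
  obtain ⟨s, hsJ, hs⟩ := hM.exists_finset_annihilating J
  obtain ⟨z, hz, hzy⟩ := hA s y fun r hr ↦ hy ⟨r, hsJ r hr⟩ ▸ (g ⟨r, hsJ r hr⟩).2
  have hJ := hs (z - y) fun r hr ↦ by rw [smul_sub, hzy r hr, sub_self]
  refine ⟨⟨z, hz⟩, fun r ↦ Subtype.ext ?_⟩
  calc (r : R) • z = (r : R) • y := by rw [← sub_eq_zero, ← smul_sub, hJ r r.2]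
    _ = g r := hy r

lemma exists_maximal_injective_notMem [Small.{v} R] (hM : IsSigmaInjective R M) {x : M}
    (hx : x ≠ 0) :
    ∃ A, Maximal (fun B : Submodule R M ↦ Module.Injective R B ∧ x ∉ B) A := by
  have hbot : Module.Injective R (⊥ : Submodule R M) :=
    injective_of_isCompl hM.injective isCompl_bot_top
  refine (zorn_le_nonempty₀ {B : Submodule R M | Module.Injective R B ∧ x ∉ B}
    (fun c hc hchain B hB ↦ ⟨sSup c, ⟨?_, ?_⟩, fun _ ↦ le_sSup⟩) ⊥
    ⟨hbot, by simpa using hx⟩).imp fun _ ↦ And.right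
  · exact hM.injective_iff_isUnivariatePure.2 <| .sSup_of_directedOn ⟨B, hB⟩ hchain.directedOn
      fun A hA ↦ .of_injective (hc hA).1
  · rw [Submodule.mem_sSup_of_directed ⟨B, hB⟩ hchain.directedOn]
    exact fun ⟨A, hA, hxA⟩ ↦ (hc hA).2 hxA

-- If `D = A ⊕ B` is a complement of a maximal injective submodule `C` avoiding `x`, then `C ⊕ A`
-- and `C ⊕ B` are injective and meet in `C`, so one of them avoids `x`.
lemma exists_injective_isIndecomposable [Small.{v} R] [Nontrivial M] (hM : IsSigmaInjective R M) :
    ∃ D : Submodule R M, Module.Injective R D ∧ IsIndecomposable R D := by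
  obtain ⟨x, hx⟩ := exists_ne (0 : M)
  obtain ⟨C, hC⟩ := hM.exists_maximal_injective_notMem hx
  obtain ⟨D, hCD⟩ := exists_isCompl_of_injective hC.prop.1
  have eq_bot_of_notMem {A B : Submodule R D} (hAB : IsCompl A B)
      (hxA : x ∉ C ⊔ A.map D.subtype) : A = ⊥ := by
    have hcompl := isCompl_sup_map_subtype hCD hAB
    have hle := hC.le_of_ge ⟨injective_of_isCompl hM.injective hcompl, hxA⟩ le_sup_left
    have hAC : A.map D.subtype ≤ C := le_sup_right.trans hle
    have hAD : A.map D.subtype ≤ D := Submodule.map_subtype_le D A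
    exact Submodule.map_injective_of_injective D.subtype_injective
      (by rw [le_bot_iff.1 (hCD.disjoint hAC hAD), Submodule.map_bot])
  refine ⟨D, injective_of_isCompl hM.injective hCD.symm, ?_, fun A B hAB ↦ ?_⟩
  · rw [Submodule.nontrivial_iff_ne_bot]
    rintro rfl
    exact hC.prop.2 (eq_top_of_isCompl_bot hCD ▸ Submodule.mem_top)
  · have hinf : (C ⊔ A.map D.subtype) ⊓ (C ⊔ B.map D.subtype) = C := by
      rw [inf_comm, sup_inf_assoc_of_le _ le_sup_left,
        (isCompl_sup_map_subtype hCD hAB).symm.inf_eq_bot, sup_bot_eq]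
    by_contra! hne
    have hxA := not_not.1 fun h ↦ hne.1 (eq_bot_of_notMem hAB h)
    have hxB := not_not.1 fun h ↦ hne.2 (eq_bot_of_notMem hAB.symm h)
    exact hC.prop.2 (hinf ▸ ⟨hxA, hxB⟩)

lemma exists_sSupIndep_sSup_eq_top [Small.{v} R] (hM : IsSigmaInjective R M) :
    ∃ S : Set (Submodule R M), sSupIndep S ∧ sSup S = ⊤ ∧
      ∀ D ∈ S, Module.Injective R D ∧ IsIndecomposable R D := by
  obtain ⟨S, hS⟩ := exists_maximal_sSupIndep
    fun D : Submodule R M ↦ Module.Injective R D ∧ IsIndecomposable R D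
  have hsum : Module.Injective R (sSup S : Submodule R M) := by
    rw [sSup_eq_iSup']
    exact hM.injective_iSup ((sSupIndep_iff S).1 hS.prop.1) fun D ↦ (hS.prop.2 D D.2).1
  obtain ⟨C, hSC⟩ := exists_isCompl_of_injective hsum
  suffices hC : C = ⊥ from ⟨S, hS.prop.1, eq_top_of_isCompl_bot (hC ▸ hSC), hS.prop.2⟩
  by_contra hC
  have := Submodule.nontrivial_iff_ne_bot.2 hC
  have hCinj := injective_of_isCompl hM.injective hSC.symm
  obtain ⟨D, hDinj, hD⟩ := (hM.submodule hCinj).exists_injective_isIndecomposable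
  let D' := D.map C.subtype
  have hdisj : Disjoint D' (sSup S) :=
    (hSC.disjoint.mono_right (Submodule.map_subtype_le C D)).symm
  have e : D ≃ₗ[R] D' := Submodule.equivSubtypeMap C D
  have hD' : IsIndecomposable R D' := hD.of_linearEquiv e
  have hmem : D' ∈ S := hS.le_of_ge
    ⟨sSupIndep_insert_of_disjoint hS.prop.1 hdisj,
      Set.forall_mem_insert.2 ⟨⟨injective_of_linearEquiv hDinj e, hD'⟩, hS.prop.2⟩⟩
    (Set.subset_insert _ _) (Set.mem_insert _ _)
  exact Submodule.nontrivial_iff_ne_bot.1 hD'.1 (disjoint_self.1 (hdisj.mono_right (le_sSup hmem)))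

lemma exists_linearEquiv_finsupp [Small.{v} R] {E : Type*} [AddCommGroup E] [Module R E]
    (hM : IsSigmaInjective R M)
    (hE : ∀ D : Submodule R M, Module.Injective R D → IsIndecomposable R D →
      Nonempty (D ≃ₗ[R] E)) :
    ∃ I : Type v, Nonempty (M ≃ₗ[R] (I →₀ E)) := by
  classical
  obtain ⟨S, hind, htop, hS⟩ := hM.exists_sSupIndep_sSup_eq_top
  have toE (D : S) : D.1 ≃ₗ[R] E := (hE D.1 (hS D.1 D.2).1 (hS D.1 D.2).2).some
  have toM : (Π₀ D : S, D.1) ≃ₗ[R] M :=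
    ((sSupIndep_iff S).1 hind).linearEquiv (sSup_eq_iSup' S ▸ htop)
  exact ⟨S, ⟨toM.symm ≪≫ₗ DFinsupp.mapRange.linearEquiv toE ≪≫ₗ (finsuppLequivDFinsupp R).symm⟩⟩

end IsSigmaInjective

end SigmaInjective

section Cardinality

variable {R : Type u} [Ring R] {M : Type u} [AddCommGroup M] [Module R M]

/-- A first-order language of `R`-modules with two function symbols for each tuple `r` of scalars:
the linear combination with coefficients `r`, and a choice of a solution of the system
`r i • y = a i`. -/
def linearSystemLanguage (R : Type u) : FirstOrder.Language.{u, 0} where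
  Functions n := (Fin n → R) ⊕ (Fin n → R)
  Relations _ := Empty

open Classical in
/-- The interpretation of `linearSystemLanguage R` in an `R`-module. The solution symbol takes
the value `0` on unsolvable systems. -/
noncomputable instance linearSystemStructure (R : Type u) [Ring R] (M : Type v) [AddCommGroup M]
    [Module R M] : (linearSystemLanguage R).Structure M where
  funMap f a := match f with
    | .inl r => ∑ i, r i • a i
    | .inr r => if h : ∃ y : M, ∀ i, r i • y = a i then h.choose else 0
  RelMap := nofun

lemma mk_sigma_functions_linearSystemLanguage_le (R : Type u) :
    #(Σ n, (linearSystemLanguage R).Functions n) ≤ #R + ℵ₀ := by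
  have hlist : #(Σ n, Fin n → R) ≤ #R + ℵ₀ := by
    rw [← mk_congr List.equivSigmaTuple]
    exact (mk_list_le_max R).trans (max_le (self_le_add_left _ _) (self_le_add_right _ _))
  change #(Σ n, (Fin n → R) ⊕ (Fin n → R)) ≤ #R + ℵ₀
  rw [mk_congr (Equiv.sigmaSumDistrib (fun n ↦ Fin n → R) fun n ↦ Fin n → R), ← add_def]
  exact add_le_of_le (self_le_add_left _ _) hlist hlist

lemma exists_isUnivariatePure_mk_le (s : Set M) :
    ∃ N : Submodule R M, s ⊆ N ∧ IsUnivariatePure N ∧ #N ≤ #s + (#R + ℵ₀) := by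
  let L := linearSystemLanguage R
  let A := FirstOrder.Language.Substructure.closure L s
  have combination_mem {n : ℕ} (r : Fin n → R) {a : Fin n → M} (ha : ∀ i, a i ∈ A) :
      ∑ i, r i • a i ∈ A := A.fun_mem (.inl r : L.Functions n) a ha
  let N : Submodule R M :=
    { carrier := A
      zero_mem' := by simpa using combination_mem ![] (a := ![]) (by simp)
      add_mem' {x y} hx hy := by
        simpa using combination_mem ![1, 1] (a := ![x, y]) (Fin.forall_fin_two.2 ⟨hx, hy⟩)
      smul_mem' r x hx := by simpa using combination_mem ![r] (a := ![x]) (by simpa) }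
  refine ⟨N, FirstOrder.Language.Substructure.subset_closure, fun t y hy ↦ ?_, ?_⟩
  · let r : Fin t.card → R := fun i ↦ t.equivFin.symm i
    have hsolvable : ∃ z : M, ∀ i, r i • z = r i • y := ⟨y, fun _ ↦ rfl⟩
    let solve : L.Functions t.card := .inr r
    have hsolve : FirstOrder.Language.Structure.funMap solve (fun i ↦ r i • y) =
        hsolvable.choose := dif_pos hsolvable
    have hmem : hsolvable.choose ∈ A :=
      hsolve ▸ A.fun_mem solve _ fun i ↦ hy _ (t.equivFin.symm i).2
    exact ⟨_, hmem, fun a ha ↦ by simpa [r] using hsolvable.choose_spec (t.equivFin ⟨a, ha⟩)⟩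
  · have hcard : #A ≤ max ℵ₀ (#s + #(Σ n, L.Functions n)) := by
      simpa using FirstOrder.Language.Substructure.lift_card_closure_le (L := L) (s := s)
    refine hcard.trans (max_le ?_ ?_)
    · exact (self_le_add_left _ _).trans (self_le_add_left _ _)
    · gcongr
      exact mk_sigma_functions_linearSystemLanguage_le R

lemma IsSigmaInjective.mk_le_of_isIndecomposable (hM : IsSigmaInjective R M)
    (hind : IsIndecomposable R M) : #M ≤ #R + ℵ₀ := by
  have := hind.1
  obtain ⟨x, hx⟩ := exists_ne (0 : M)
  obtain ⟨N, hxN, hpure, hcard⟩ := exists_isUnivariatePure_mk_le (R := R) {x}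
  have hN := hM.injective_iff_isUnivariatePure.2 hpure
  rcases hind.eq_bot_or_eq_top_of_injective hN with rfl | rfl
  · exact (hx (by simpa using hxN)).elim
  · calc #M = #(⊤ : Submodule R M) := (mk_congr Submodule.topEquiv.toEquiv).symm
      _ ≤ #({x} : Set M) + (#R + ℵ₀) := hcard
      _ = #R + ℵ₀ := by
        rw [mk_singleton]
        exact add_eq_right (self_le_add_left _ _) (one_le_aleph0.trans (self_le_add_left _ _))

lemma mk_finsupp_eq_iff {E I : Type u} [Zero E] [Nontrivial E] {κ c : Cardinal.{u}}
    (hκ : ℵ₀ ≤ κ) (hE : #E ≤ κ) (hc : κ < c) : #(I →₀ E) = c ↔ #I = c := by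
  cases finite_or_infinite I with
  | inl =>
    have := Fintype.ofFinite I
    have hfinsupp : #(I →₀ E) < c := by
      rw [mk_finsupp_of_fintype]
      exact ((power_le_power_right hE).trans (power_nat_le hκ)).trans_lt hc
    exact iff_of_false hfinsupp.ne ((mk_lt_aleph0 (α := I)).trans_le (hκ.trans hc.le)).ne
  | inr =>
    rw [mk_finsupp_of_infinite]
    exact ⟨fun h ↦ (max_eq_iff.1 h).elim And.left fun h ↦ absurd h.1 (hE.trans_lt hc).ne,
      fun h ↦ by rw [h, max_eq_left (hE.trans hc.le)]⟩

end Cardinality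

section Categoricity

variable {R : Type u} [Ring R] {c : Cardinal.{u}}

lemma Categorical.exists_isIndecomposable (h : Categorical R (SigmaInjective R) c) (hc : 1 < c) :
    ∃ E : ModuleCat.{u} R, IsSigmaInjective R E ∧ IsIndecomposable R E := by
  obtain ⟨⟨M, hM, rfl⟩, -⟩ := h
  have hM' := (sigmaInjective_iff M).1 hM
  have := one_lt_iff_nontrivial.1 hc
  obtain ⟨D, hDinj, hD⟩ := hM'.exists_injective_isIndecomposable
  exact ⟨.of R D, hM'.submodule hDinj, hD⟩

lemma Categorical.nonempty_linearEquiv_of_isIndecomposable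
    (h : Categorical R (SigmaInjective R) c) (hc : #R + ℵ₀ < c) {D E : Type u}
    [AddCommGroup D] [Module R D] [AddCommGroup E] [Module R E] (hD : IsSigmaInjective R D)
    (hDind : IsIndecomposable R D) (hE : IsSigmaInjective R E) (hEind : IsIndecomposable R E) :
    Nonempty (D ≃ₗ[R] E) := by
  have := hDind.1
  have := hEind.1
  have hκ : ℵ₀ ≤ #R + ℵ₀ := self_le_add_left _ _
  have hDc := mk_finsupp_eq_iff (I := c.out) hκ (hD.mk_le_of_isIndecomposable hDind) hc
  have hEc := mk_finsupp_eq_iff (I := c.out) hκ (hE.mk_le_of_isIndecomposable hEind) hc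
  obtain ⟨e⟩ := h.2 (.of R (c.out →₀ D)) (.of R (c.out →₀ E))
    ((sigmaInjective_iff _).2 (hD.finsupp _)) ((sigmaInjective_iff _).2 (hE.finsupp _))
    (hDc.2 (mk_out c)) (hEc.2 (mk_out c))
  have : Nonempty c.out := mk_ne_zero_iff.1 ((mk_out c).trans_ne (pos_of_gt hc).ne')
  exact hDind.nonempty_linearEquiv_of_finsupp hD.injective hEind e

lemma categorical_of_unique_isIndecomposable {E : Type u} [AddCommGroup E] [Module R E]
    (hE : IsSigmaInjective R E) (hEind : IsIndecomposable R E)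
    (huniq : ∀ (D : Type u) [AddCommGroup D] [Module R D], IsSigmaInjective R D →
      IsIndecomposable R D → Nonempty (D ≃ₗ[R] E)) (hc : #R + ℵ₀ < c) :
    Categorical R (SigmaInjective R) c := by
  have := hEind.1
  have hcard (I : Type u) : #(I →₀ E) = c ↔ #I = c :=
    mk_finsupp_eq_iff (self_le_add_left _ _) (hE.mk_le_of_isIndecomposable hEind) hc
  have nonempty_equiv (M : ModuleCat.{u} R) (hM : SigmaInjective R M) (hMc : #M = c) :
      Nonempty (M ≃ₗ[R] (c.out →₀ E)) := by
    have hM' := (sigmaInjective_iff M).1 hM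
    obtain ⟨I, ⟨e⟩⟩ := hM'.exists_linearEquiv_finsupp
      fun D hDinj hD ↦ huniq D (hM'.submodule hDinj) hD
    have hI : #I = c := (hcard I).1 ((mk_congr e.toEquiv).symm.trans hMc)
    obtain ⟨f⟩ := Cardinal.eq.1 (hI.trans (mk_out c).symm)
    exact ⟨e ≪≫ₗ Finsupp.domLCongr f⟩
  refine ⟨⟨.of R (c.out →₀ E), (sigmaInjective_iff _).2 (hE.finsupp _),
    (hcard _).2 (mk_out c)⟩, fun M N hM hN hMc hNc ↦ ?_⟩
  obtain ⟨e⟩ := nonempty_equiv M hM hMc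
  obtain ⟨e'⟩ := nonempty_equiv N hN hNc
  exact ⟨e ≪≫ₗ e'.symm⟩

end Categoricity

theorem stmt2 (R : Type u) [Ring R] :
    (∀ c : Cardinal.{u}, #R + ℵ₀ < c → Categorical R (SigmaInjective R) c) ↔
    (∃ c : Cardinal.{u}, #R + ℵ₀ < c ∧ Categorical R (SigmaInjective R) c) := by
  refine ⟨fun h ↦ ⟨Order.succ (#R + ℵ₀), Order.lt_succ _, h _ (Order.lt_succ _)⟩, ?_⟩
  rintro ⟨c, hc, hcat⟩ c' hc'
  have hc1 : 1 < c := (one_lt_aleph0.trans_le (self_le_add_left _ _)).trans hc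
  obtain ⟨E, hE, hEind⟩ := hcat.exists_isIndecomposable hc1
  exact categorical_of_unique_isIndecomposable hE hEind
    (fun D _ _ hD hDind ↦ hcat.nonempty_linearEquiv_of_isIndecomposable hc hD hDind hE hEind) hc'
end

section
/- Let R be an associative ring with unity. If the class of all left R-modules is λ-categorical in some cardinal λ > card(R) + ℵ₀, then R is a semisimple ring; in particular every finitely generated left R-module is projective. -/
/-! Statement 11: if the class of all left `R`-modules is categorical in some cardinal
`> card R + ℵ₀`, then `R` is a semisimple ring; in particular every finitely generated
left `R`-module is projective. -/

universe u

open Cardinal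

/-!
For a maximal left ideal `m`, the direct sums of `c` copies of `R` and of `c` copies of the simple
module `R ⧸ m` both have cardinality `c`, so categoricity makes them isomorphic. The second is
semisimple, and `R` embeds in the first.
-/

theorem isSemisimpleModule_finsupp_iff {R M ι : Type*} [Ring R] [AddCommGroup M] [Module R M]
    [Nonempty ι] : IsSemisimpleModule R (ι →₀ M) ↔ IsSemisimpleModule R M := by
  refine ⟨fun _ => ?_, fun _ => inferInstance⟩
  obtain ⟨i⟩ := ‹Nonempty ι›
  exact .of_injective (Finsupp.lsingle (R := R) i) (Finsupp.single_injective i)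

theorem exists_isSimpleModule_quotient (R : Type*) [Ring R] [Nontrivial R] :
    ∃ m : Ideal R, IsSimpleModule R (R ⧸ m) :=
  let ⟨m, hm⟩ := Ideal.exists_maximal R
  ⟨m, isSimpleModule_iff_isCoatom.2 hm.out⟩

theorem mk_finsupp_eq_of_mk_le {ι M : Type u} [Infinite ι] [Zero M] [Nontrivial M]
    (hM : #M ≤ #ι) : #(ι →₀ M) = #ι := by
  rw [mk_finsupp_of_infinite, max_eq_left hM]

namespace Categorical

variable {R ι M N : Type u} [Ring R] {K : ModuleCat.{u} R → Prop} [Infinite ι]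
  [AddCommGroup M] [Module R M] [Nontrivial M] [AddCommGroup N] [Module R N] [Nontrivial N]

theorem nonempty_finsupp_linearEquiv (h : Categorical R K #ι) (hM : #M ≤ #ι) (hN : #N ≤ #ι)
    (hKM : K (ModuleCat.of R (ι →₀ M))) (hKN : K (ModuleCat.of R (ι →₀ N))) :
    Nonempty ((ι →₀ M) ≃ₗ[R] (ι →₀ N)) :=
  h.2 (ModuleCat.of R (ι →₀ M)) (ModuleCat.of R (ι →₀ N)) hKM hKN
    (mk_finsupp_eq_of_mk_le hM) (mk_finsupp_eq_of_mk_le hN)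

theorem isSemisimpleModule [IsSemisimpleModule R N] (h : Categorical R K #ι)
    (hM : #M ≤ #ι) (hN : #N ≤ #ι)
    (hKM : K (ModuleCat.of R (ι →₀ M))) (hKN : K (ModuleCat.of R (ι →₀ N))) :
    IsSemisimpleModule R M := by
  obtain ⟨e⟩ := h.nonempty_finsupp_linearEquiv hM hN hKM hKN
  exact isSemisimpleModule_finsupp_iff.1 (IsSemisimpleModule.congr e)

theorem isSemisimpleRing {c : Cardinal.{u}} (h : Categorical R K c) (hR : #R ≤ c) (hc : ℵ₀ ≤ c)
    (hfree : ∀ P : ModuleCat.{u} R, Module.Free R P → K P)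
    (hsemisimple : ∀ P : ModuleCat.{u} R, IsSemisimpleModule R P → K P) :
    IsSemisimpleRing R := by
  induction c using Cardinal.inductionOn with | _ ι
  have : Infinite ι := infinite_iff.2 hc
  cases subsingleton_or_nontrivial R
  · infer_instance
  obtain ⟨m, _⟩ := exists_isSimpleModule_quotient R
  have : Nontrivial (R ⧸ m) := IsSimpleModule.nontrivial R _
  have hm : #(R ⧸ m) ≤ #ι := (mk_le_of_surjective m.mkQ_surjective).trans hR
  exact h.isSemisimpleModule hR hm
    (hfree _ (inferInstanceAs (Module.Free R (ι →₀ R))))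
    (hsemisimple _ (inferInstanceAs (IsSemisimpleModule R (ι →₀ R ⧸ m))))

end Categorical

theorem stmt11_general {R : Type u} [Ring R] {K : ModuleCat.{u} R → Prop} {c : Cardinal.{u}}
    (h : Categorical R K c) (hc : #R + ℵ₀ ≤ c)
    (hfree : ∀ P : ModuleCat.{u} R, Module.Free R P → K P)
    (hsemisimple : ∀ P : ModuleCat.{u} R, IsSemisimpleModule R P → K P) :
    IsSemisimpleRing R ∧
      ∀ (M : Type*) [AddCommGroup M] [Module R M], Module.Projective R M := by
  have : IsSemisimpleRing R :=
    h.isSemisimpleRing (le_self_add.trans hc) (le_add_self.trans hc) hfree hsemisimple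
  exact ⟨this, fun M _ _ => Module.projective_of_isSemisimpleRing R M⟩

theorem stmt11 (R : Type u) [Ring R]
    (h : ∃ c : Cardinal.{u}, #R + ℵ₀ < c ∧ Categorical R (fun _ => True) c) :
    IsSemisimpleRing R ∧
      ∀ (M : Type u) [AddCommGroup M] [Module R M],
        Module.Finite R M → Module.Projective R M := by
  obtain ⟨c, hc, hcat⟩ := h
  have hgen := stmt11_general hcat hc.le (fun _ _ => trivial) (fun _ _ => trivial)
  exact ⟨hgen.1, fun M _ _ _ => hgen.2 M⟩
end

section
/- Let F be a countable field and V an infinite-dimensional F-vector space, and let R = T(F, V) be the trivial (square-zero) extension of F by V. Then R is a commutative local ring whose maximal ideal is T-nilpotent, and the class of flat R-modules is λ-categorical in all cardinals λ > card(R) + ℵ₀. -/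
/-! Statement 12: let `F` be a countable field, `V` an infinite-dimensional `F`-vector
space and `R = T(F, V)` the trivial square-zero extension.  Then `R` is a (commutative)
local ring whose maximal ideal (the set of non-invertible elements) is `T`-nilpotent,
and the class of flat `R`-modules is categorical in all cardinals `> card R + ℵ₀`. -/

universe u

open Cardinal

/-- A subset `I` of a ring is (left) `T`-nilpotent if for every sequence `(aₙ)` of
elements of `I` there is `n ≥ 1` with `a₀ * a₁ * ⋯ * a_{n-1} = 0`. -/
def IsTNilpotent {k : Type u} [Ring k] (I : Set k) : Prop :=
  ∀ a : ℕ → k, (∀ i, a i ∈ I) → ∃ n : ℕ, 1 ≤ n ∧ ((List.range n).map a).prod = 0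

section
variable (F V : Type u) [Field F] [AddCommGroup V] [Module F V]

/-- The right `F`-module structure on `V` coming from commutativity of `F`; it makes the
trivial square-zero extension `TrivSqZeroExt F V` a commutative ring whose multiplication
is `(a, v) * (b, w) = (a * b, a • w + b • v)`. -/
noncomputable instance instOpModule : Module Fᵐᵒᵖ V :=
  Module.compHom V ((RingHom.id F).fromOpposite mul_comm)

instance : IsCentralScalar F V := ⟨fun _ _ => rfl⟩

end

/-!
If every element of `M` lies in `I • M`, then repeatedly expanding a nonzero element produces
nonzero products `a₀ ⋯ aₙ` of arbitrary length in `I`; hence Nakayama's lemma holds for a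
`T`-nilpotent `I` with no finiteness condition on `M`.  Over a local ring with `T`-nilpotent maximal
ideal, a basis of `M / 𝔪M` therefore lifts to a generating family of `M`, which is linearly
independent when `M` is flat, so flat modules are free.  A free module larger than `card R + ℵ₀` is
determined by its cardinality, which equals its rank.

The nonunits of `T(k, V)` are the preimage of those of `k` under a projection with square-zero
kernel, so the `T`-nilpotency of the former follows from that of the latter: two consecutive blocks
of a sequence whose products vanish in `k` multiply to zero in `T(k, V)`.
-/

universe v

open TensorProduct IsLocalRing

section Nakayama

variable {R : Type u} {M : Type v} [Ring R] [AddCommGroup M] [Module R M] {I : Ideal R}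

theorem exists_mul_smul_ne_zero_of_smul_top_eq_top (hIM : I • (⊤ : Submodule R M) = ⊤)
    {r : R} {x : M} (hrx : r • x ≠ 0) : ∃ a ∈ I, ∃ y : M, (r * a) • y ≠ 0 := by
  by_contra! h
  have hann : ∀ z ∈ I • (⊤ : Submodule R M), r • z = 0 := fun z hz ↦
    Submodule.smul_induction_on hz (fun a ha y _ ↦ by rw [smul_smul, h a ha y])
      fun y z hy hz ↦ by rw [smul_add, hy, hz, add_zero]
  exact hrx (hann x (hIM.ge Submodule.mem_top))

theorem IsTNilpotent.subsingleton_of_smul_top_eq_top (hI : IsTNilpotent (I : Set R))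
    (hIM : I • (⊤ : Submodule R M) = ⊤) : Subsingleton M := by
  refine subsingleton_of_forall_eq 0 fun x ↦ by_contra fun hx ↦ ?_
  choose! a ha y hay using fun p : R × M ↦
    exists_mul_smul_ne_zero_of_smul_top_eq_top hIM (r := p.1) (x := p.2)
  let p : ℕ → R × M := Nat.rec (1, x) fun _ q ↦ (q.1 * a q, y q)
  have hp : ∀ n, (p n).1 • (p n).2 ≠ 0 := by
    intro n
    induction n with
    | zero => exact (one_smul R x).trans_ne hx
    | succ n ih => exact hay (p n) ih
  have hprod : ∀ n, ((List.range n).map fun i ↦ a (p i)).prod = (p n).1 := by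
    intro n
    induction n with
    | zero => rfl
    | succ n ih => rw [List.prod_range_succ, ih]
  obtain ⟨n, -, hn⟩ := hI (fun i ↦ a (p i)) fun i ↦ ha (p i) (hp i)
  exact hp n (by rw [← hprod, hn, zero_smul])

theorem IsTNilpotent.eq_top_of_sup_smul_top_eq_top (hI : IsTNilpotent (I : Set R))
    {N : Submodule R M} (hN : N ⊔ I • (⊤ : Submodule R M) = ⊤) : N = ⊤ := by
  refine Submodule.Quotient.subsingleton_iff.mp (hI.subsingleton_of_smul_top_eq_top ?_)
  have h := congrArg (Submodule.map N.mkQ) hN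
  rwa [Submodule.map_sup, Submodule.mkQ_map_self, bot_sup_eq, Submodule.map_smul'',
    Submodule.map_top, Submodule.range_mkQ] at h

end Nakayama

section Flat

variable {R : Type u} [CommRing R]

theorem span_sup_smul_top_eq_top_of_span_tmul_eq_top {M : Type v} [AddCommGroup M] [Module R M]
    (I : Ideal R) {ι : Type*} {v : ι → M}
    (hv : Submodule.span (R ⧸ I) (Set.range (TensorProduct.mk R (R ⧸ I) M 1 ∘ v)) = ⊤) :
    Submodule.span R (Set.range v) ⊔ I • (⊤ : Submodule R M) = ⊤ := by
  have hmap : (Submodule.span R (Set.range v)).map (TensorProduct.mk R (R ⧸ I) M 1) = ⊤ := by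
    rw [Submodule.map_span, ← Submodule.restrictScalars_span R (R ⧸ I)
      Ideal.Quotient.mk_surjective, Submodule.restrictScalars_eq_top_iff, ← Set.range_comp, hv]
  rw [← LinearMap.ker_tensorProductMk, ← Submodule.comap_map_eq, hmap, Submodule.comap_top]

variable [IsLocalRing R]

theorem IsTNilpotent.free_of_flat (hR : IsTNilpotent (maximalIdeal R : Set R))
    (M : Type v) [AddCommGroup M] [Module R M] [Module.Flat R M] : Module.Free R M := by
  let w := Module.Free.chooseBasis (ResidueField R) (ResidueField R ⊗[R] M)
  obtain ⟨v, hv⟩ : ∃ v : _ → M, TensorProduct.mk R (ResidueField R) M 1 ∘ v = w :=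
    (TensorProduct.mk_surjective R M (ResidueField R) Ideal.Quotient.mk_surjective).comp_left w
  have hindep : LinearIndependent R v :=
    Module.IsLocalRing.linearIndependent_of_flat v (by rw [hv]; exact w.linearIndependent)
  have hspan_mk : Submodule.span (ResidueField R)
      (Set.range (TensorProduct.mk R (ResidueField R) M 1 ∘ v)) = ⊤ := by rw [hv, w.span_eq]
  have hspan : Submodule.span R (Set.range v) = ⊤ :=
    hR.eq_top_of_sup_smul_top_eq_top (span_sup_smul_top_eq_top_of_span_tmul_eq_top _ hspan_mk)
  exact .of_basis (.mk hindep hspan.ge)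

theorem IsTNilpotent.flat_iff_free (hR : IsTNilpotent (maximalIdeal R : Set R))
    (M : Type v) [AddCommGroup M] [Module R M] : Module.Flat R M ↔ Module.Free R M :=
  ⟨fun _ ↦ hR.free_of_flat M, fun _ ↦ inferInstance⟩

end Flat

section Free

variable {R : Type u} [Ring R] [StrongRankCondition R]

theorem rank_eq_mk_of_lt_mk {M : Type u} [AddCommGroup M] [Module R M] [Module.Free R M]
    (hM : #R + ℵ₀ < #M) : Module.rank R M = #M := by
  have := nontrivial_of_invariantBasisNumber R
  obtain ⟨ι, b⟩ := Module.Free.exists_basis R M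
  have hcard : #M = #(ι →₀ R) := b.repr.toEquiv.cardinal_eq
  have hRM : #R < #M := le_self_add.trans_lt hM
  have hι : Infinite ι := by
    by_contra hfin
    have := @Fintype.ofFinite ι (not_infinite_iff_finite.mp hfin)
    refine hM.not_ge ?_
    rw [hcard, mk_finsupp_of_fintype]
    exact power_nat_le_max.trans (max_le le_self_add le_add_self)
  have hmax : #M = max #ι #R := hcard.trans (mk_finsupp_of_infinite ι R)
  obtain hι_max | hR_max := max_choice #ι #R
  · rw [← b.mk_eq_rank'', hmax, hι_max]
  · exact absurd (hmax.trans hR_max) hRM.ne'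

theorem categorical_free {c : Cardinal.{u}} (hc : #R + ℵ₀ < c) :
    Categorical R (fun M ↦ Module.Free R M) c := by
  have := nontrivial_of_invariantBasisNumber R
  have : Infinite c.out := infinite_iff.mpr (by rw [mk_out]; exact le_add_self.trans hc.le)
  refine ⟨⟨.of R (c.out →₀ R), .finsupp .., ?_⟩, fun M N _ _ hM hN ↦ ?_⟩
  · exact (mk_finsupp_of_infinite _ _).trans (by rw [mk_out, max_eq_left (le_self_add.trans hc.le)])
  · refine nonempty_linearEquiv_of_rank_eq ?_
    rw [rank_eq_mk_of_lt_mk (hM ▸ hc), rank_eq_mk_of_lt_mk (hN ▸ hc), hM, hN]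

end Free

theorem IsTNilpotent.categorical_flat {R : Type u} [CommRing R] [IsLocalRing R]
    (hR : IsTNilpotent (maximalIdeal R : Set R)) {c : Cardinal.{u}} (hc : #R + ℵ₀ < c) :
    Categorical R (fun M ↦ Module.Flat R M) c := by
  simpa only [hR.flat_iff_free] using categorical_free hc

theorem IsTNilpotent.preimage_of_ker_mul_ker_eq_zero {R : Type u} {S : Type v} [Ring R] [Ring S]
    {I : Set R} (hI : IsTNilpotent I) (φ : S →+* R)
    (hφ : ∀ x y, φ x = 0 → φ y = 0 → x * y = 0) : IsTNilpotent (φ ⁻¹' I) := by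
  have hvanish : ∀ a : ℕ → S, (∀ i, φ (a i) ∈ I) →
      ∃ n, 1 ≤ n ∧ φ ((List.range n).map a).prod = 0 := fun a ha ↦ by
    simpa only [map_list_prod, List.map_map] using hI (φ ∘ a) ha
  intro a ha
  obtain ⟨m, hm, hφm⟩ := hvanish a ha
  obtain ⟨n, -, hφn⟩ := hvanish (fun i ↦ a (m + i)) fun i ↦ ha (m + i)
  refine ⟨m + n, hm.trans le_self_add, ?_⟩
  rw [List.range_add, List.map_append, List.prod_append, List.map_map]
  exact hφ _ _ hφm hφn

section TrivSqZeroExt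

variable {k : Type u} (V : Type v) [CommRing k] [AddCommGroup V] [Module k V] [Module kᵐᵒᵖ V]
  [IsCentralScalar k V]

instance isLocalHom_trivSqZeroExt_fstHom : IsLocalHom (TrivSqZeroExt.fstHom k k V).toRingHom :=
  ⟨fun _ ↦ TrivSqZeroExt.isUnit_iff_isUnit_fst.mpr⟩

theorem isTNilpotent_nonunits_trivSqZeroExt (hk : IsTNilpotent (nonunits k)) :
    IsTNilpotent (nonunits (TrivSqZeroExt k V)) := by
  have hpre : nonunits (TrivSqZeroExt k V) =
      (TrivSqZeroExt.fstHom k k V).toRingHom ⁻¹' nonunits k :=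
    Set.ext fun _ ↦ not_congr TrivSqZeroExt.isUnit_iff_isUnit_fst
  rw [hpre]
  refine hk.preimage_of_ker_mul_ker_eq_zero _ fun x y hx hy ↦ ?_
  change x.fst = 0 at hx
  change y.fst = 0 at hy
  ext <;> simp [hx, hy]

end TrivSqZeroExt

theorem stmt12_general (k : Type u) (V : Type v) [CommRing k] [IsLocalRing k] [AddCommGroup V]
    [Module k V] [Module kᵐᵒᵖ V] [IsCentralScalar k V] (hk : IsTNilpotent {x : k | ¬IsUnit x}) :
    IsLocalRing (TrivSqZeroExt k V) ∧
      IsTNilpotent {x : TrivSqZeroExt k V | ¬IsUnit x} ∧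
      ∀ c : Cardinal.{max u v}, #(TrivSqZeroExt k V) + ℵ₀ < c →
        Categorical (TrivSqZeroExt k V)
          (fun M => Module.Flat (TrivSqZeroExt k V) M) c := by
  have hlocal := (TrivSqZeroExt.fstHom k k V).toRingHom.domain_isLocalRing
  have hnil := isTNilpotent_nonunits_trivSqZeroExt V hk
  exact ⟨hlocal, hnil, fun _ hc ↦ hnil.categorical_flat hc⟩

theorem isTNilpotent_nonunits_of_divisionRing (D : Type u) [DivisionRing D] :
    IsTNilpotent (nonunits D) :=
  fun a ha ↦ ⟨1, le_rfl, by simpa using ha 0⟩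

theorem stmt12 (F V : Type u) [Field F] [Countable F] [AddCommGroup V] [Module F V]
    (hV : ¬Module.Finite F V) :
    IsLocalRing (TrivSqZeroExt F V) ∧
      IsTNilpotent {x : TrivSqZeroExt F V | ¬IsUnit x} ∧
      ∀ c : Cardinal.{u}, #(TrivSqZeroExt F V) + ℵ₀ < c →
        Categorical (TrivSqZeroExt F V)
          (fun M => Module.Flat (TrivSqZeroExt F V) M) c :=
  stmt12_general F V (isTNilpotent_nonunits_of_divisionRing F)
end

section
/- Let F be a countable field and V an infinite-dimensional F-vector space, let S = T(F, V) be the trivial (square-zero) extension of F by V, and let R = S × S (the product ring). Then the class of flat R-modules is not λ-categorical in any cardinal λ > card(R) + ℵ₀. -/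
/-! Statement 13: let `F` be a countable field, `V` an infinite-dimensional `F`-vector
space, `S = T(F, V)` the trivial square-zero extension, and `R = S × S`.  Then the class
of flat `R`-modules is not categorical in any cardinal `> card R + ℵ₀`. -/

universe u

open Cardinal

/-! Isomorphic modules have the same annihilator. If `I` is a pure ideal with `⊥ ≠ I ≠ ⊤`, then the
direct sums of `c` copies of `R` and of `c` copies of `R ⧸ I` are flat of cardinality `c`, with
annihilators `⊥` and `I`. In a product of two nontrivial rings, the idempotent `(1, 0)` generates
such an ideal. -/

theorem flat_finsupp {R : Type*} [CommSemiring R] (ι M : Type*) [AddCommMonoid M] [Module R M]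
    [Module.Flat R M] : Module.Flat R (ι →₀ M) := by
  classical exact .of_linearEquiv (finsuppLEquivDirectSum R M ι)

theorem pure_span_singleton_of_isIdempotentElem {R : Type*} [CommRing R] {e : R}
    (he : IsIdempotentElem e) : (Ideal.span {e}).Pure :=
  .of_isIdempotentElem (Submodule.fg_span_singleton e) <| by
    rw [IsIdempotentElem, Ideal.span_singleton_mul_span_singleton, he.eq]

theorem mk_out_finsupp {c : Cardinal.{u}} (hc : ℵ₀ ≤ c) {M : Type u} [Zero M] [Nontrivial M]
    (hM : #M ≤ c) : #(c.out →₀ M) = c := by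
  have : Infinite c.out := by rwa [infinite_iff, mk_out]
  rw [mk_finsupp_of_infinite, mk_out, max_eq_left hM]

theorem Categorical.annihilator_eq {R : Type u} [Ring R] {K : ModuleCat.{u} R → Prop}
    {c : Cardinal.{u}} (h : Categorical R K c) {M N : ModuleCat.{u} R} (hKM : K M) (hKN : K N)
    (hM : #M = c) (hN : #N = c) : Module.annihilator R M = Module.annihilator R N :=
  let ⟨f⟩ := h.2 M N hKM hKN hM hN
  f.annihilator_eq

theorem Categorical.annihilator_eq_of_flat {R : Type u} [CommRing R] {c : Cardinal.{u}}
    (h : Categorical R (fun M => Module.Flat R M) c) (hc : ℵ₀ ≤ c) {M N : Type u}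
    [AddCommGroup M] [Module R M] [Module.Flat R M] [Nontrivial M] (hM : #M ≤ c)
    [AddCommGroup N] [Module R N] [Module.Flat R N] [Nontrivial N] (hN : #N ≤ c) :
    Module.annihilator R M = Module.annihilator R N := by
  have : Nonempty c.out := by
    rw [← mk_ne_zero_iff, mk_out]
    exact (aleph0_pos.trans_le hc).ne'
  calc
    Module.annihilator R M = Module.annihilator R (c.out →₀ M) :=
      Module.annihilator_finsupp.symm
    _ = Module.annihilator R (c.out →₀ N) :=
      h.annihilator_eq (M := .of R (c.out →₀ M)) (N := .of R (c.out →₀ N))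
        (flat_finsupp c.out M) (flat_finsupp c.out N) (mk_out_finsupp hc hM) (mk_out_finsupp hc hN)
    _ = Module.annihilator R N := Module.annihilator_finsupp

theorem stmt13_general {R : Type u} [CommRing R] (I : Ideal R) [I.Pure] (hI_bot : I ≠ ⊥)
    (hI_top : I ≠ ⊤) {c : Cardinal.{u}} (hc : ℵ₀ ≤ c) (hR : #R ≤ c) :
    ¬Categorical R (fun M => Module.Flat R M) c := by
  intro h
  have : Nontrivial (R ⧸ I) := Ideal.Quotient.nontrivial_iff.mpr hI_top
  have : Nontrivial R := (Ideal.Quotient.mk I).domain_nontrivial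
  have hRI : #(R ⧸ I) ≤ c := (mk_le_of_surjective Ideal.Quotient.mk_surjective).trans hR
  refine hI_bot ?_
  calc
    I = Module.annihilator R (R ⧸ I) := Ideal.annihilator_quotient.symm
    _ = Module.annihilator R R := h.annihilator_eq_of_flat hc hRI hR
    _ = ⊥ := Module.annihilator_eq_bot.mpr inferInstance

theorem stmt13 (F V : Type u) [Field F] [Countable F] [AddCommGroup V] [Module F V]
    (hV : ¬Module.Finite F V) :
    ∀ c : Cardinal.{u}, #(TrivSqZeroExt F V × TrivSqZeroExt F V) + ℵ₀ < c →
      ¬Categorical (TrivSqZeroExt F V × TrivSqZeroExt F V)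
        (fun M => Module.Flat (TrivSqZeroExt F V × TrivSqZeroExt F V) M) c := by
  have := pure_span_singleton_of_isIdempotentElem
    (e := ((1, 0) : TrivSqZeroExt F V × TrivSqZeroExt F V)) (by simp [IsIdempotentElem])
  exact fun c hc => stmt13_general (Ideal.span {(1, 0)}) (by simp) (by simp [Prod.isUnit_iff])
    (le_add_self.trans hc.le) (le_self_add.trans hc.le)
end

section
/- Let R be a commutative local artinian ring with unity. Then the class of injective R-modules is λ-categorical in all cardinals λ > card(R) + ℵ₀. -/
/-! Statement 15: for a commutative local artinian ring `R`, the class of injective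
`R`-modules is categorical in all cardinals `> card R + ℵ₀`. -/

universe u

open Cardinal

/-!
Let `k` be the residue field of `R`, and call the elements of a module killed by the maximal ideal
its socle. The maximal ideal is nilpotent and finitely generated, so the socle of `M` meets every
nonzero submodule of `M`, and `M` has at most as many elements as some finite power of its socle.
For an infinite cardinal `c` greater than the cardinality of `k`, a module of cardinality `c`
therefore has a socle of cardinality `c`, that is, of dimension `c` over `k`. An isomorphism
between the socles of two injective modules extends to an isomorphism of the modules.

To find an injective module of cardinality `c`, embed `k^(c)` in an injective module `Q`. Disjoint
submodules of an injective module can be enlarged to complementary ones; applied to `k^(c)` and a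
complement of it in the socle of `Q`, this yields a direct summand of `Q` with socle `k^(c)`.
-/

universe v

open IsLocalRing Submodule

section Cardinal

theorem cardinal_pow_lt_of_aleph0_le {a c : Cardinal.{u}} (hc : ℵ₀ ≤ c) (hac : a < c) (n : ℕ) :
    a ^ n < c := by
  rcases lt_or_ge a ℵ₀ with ha | ha
  · exact (Cardinal.power_lt_aleph0 ha Cardinal.natCast_lt_aleph0).trans_le hc
  · exact (Cardinal.power_nat_le ha).trans_lt hac

theorem rank_eq_mk_of_mk_lt {K V : Type u} [Ring K] [StrongRankCondition K] [AddCommGroup V]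
    [Module K V] [Module.Free K V] (hV : ℵ₀ ≤ #V) (hKV : #K < #V) : Module.rank K V = #V := by
  have : Nontrivial K := nontrivial_of_invariantBasisNumber K
  rw [Module.Free.rank_eq_card_chooseBasisIndex]
  have mk_V : #V = #(Module.Free.ChooseBasisIndex K V →₀ K) :=
    (Module.Free.chooseBasis K V).repr.toEquiv.cardinal_eq
  cases finite_or_infinite (Module.Free.ChooseBasisIndex K V) with
  | inl _ =>
    have := Fintype.ofFinite (Module.Free.ChooseBasisIndex K V)
    rw [Cardinal.mk_finsupp_of_fintype] at mk_V
    exact absurd mk_V (cardinal_pow_lt_of_aleph0_le hV hKV _).ne'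
  | inr _ =>
    rw [Cardinal.mk_finsupp_of_infinite] at mk_V
    rcases le_total #K #(Module.Free.ChooseBasisIndex K V) with hle | hle
    · rw [mk_V, max_eq_left hle]
    · exact absurd (mk_V.trans (max_eq_right hle)) hKV.ne'

theorem mk_le_mk_mul_mk_ker {G H : Type u} [AddGroup G] [AddGroup H] (f : G →+ H) :
    #G ≤ #H * #f.ker := by
  have mk_quotient_le : #(G ⧸ f.ker) ≤ #H :=
    Cardinal.mk_le_of_injective (QuotientAddGroup.kerLift_injective f)
  calc #G = #((G ⧸ f.ker) × f.ker) :=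
        AddSubgroup.addGroupEquivQuotientProdAddSubgroup.cardinal_eq
    _ = #(G ⧸ f.ker) * #f.ker := (Cardinal.mul_def _ _).symm
    _ ≤ #H * #f.ker := by gcongr

end Cardinal

section Injective

theorem exists_maximal_disjoint {α : Type*} [CompleteLattice α] [IsCompactlyGenerated α]
    {a b : α} (hab : Disjoint a b) : ∃ c, b ≤ c ∧ Maximal (Disjoint a) c :=
  zorn_le_nonempty₀ {c | Disjoint a c} (fun C hC hchain _ _ =>
    ⟨sSup C, hchain.directedOn.disjoint_sSup_right.mpr fun _ hc => hC hc,
      fun _ => le_sSup⟩) b hab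

variable {R : Type u} [Ring R] {Q : Type v} [AddCommGroup Q] [Module R Q]

theorem injective_of_isCompl_s15 [hQ : Module.Injective R Q] {E C : Submodule R Q}
    (hEC : IsCompl E C) : Module.Injective R E where
  out X Y _ _ _ _ f hf g := by
    obtain ⟨h, hh⟩ := hQ.out f hf (E.subtype ∘ₗ g)
    exact ⟨E.projectionOnto C hEC ∘ₗ h, fun x => by simp [hh]⟩

theorem isCompl_of_maximal_disjoint [hQ : Module.Injective R Q] {E C : Submodule R Q}
    (hE : Maximal (Disjoint C) E) (hC : Maximal (Disjoint E) C) : IsCompl E C := by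
  have mkQ_injective : Function.Injective (C.mkQ ∘ₗ E.subtype) := by
    rw [← LinearMap.ker_eq_bot, LinearMap.ker_comp, ker_mkQ, ← disjoint_iff_comap_eq_bot]
    exact hC.prop
  obtain ⟨g, hg⟩ := hQ.out (C.mkQ ∘ₗ E.subtype) mkQ_injective E.subtype
  set p : Q →ₗ[R] Q := g ∘ₗ C.mkQ
  have p_of_mem_E : ∀ x ∈ E, p x = x := fun x hx => hg ⟨x, hx⟩
  have p_of_mem_C : ∀ x ∈ C, p x = 0 := fun x hx => by simp [p, (Quotient.mk_eq_zero C).mpr hx]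
  have comap_le : C.comap p ≤ C := by
    refine hC.le_of_ge (disjoint_def.mpr fun x hxE hx => ?_) fun x hx => ?_
    · exact disjoint_def.mp hC.prop x hxE (p_of_mem_E x hxE ▸ hx)
    · simp [p_of_mem_C x hx]
  have range_le : LinearMap.range p ≤ E := by
    refine hE.le_of_ge (disjoint_def.mpr ?_) fun x hx => ⟨x, p_of_mem_E x hx⟩
    rintro _ hx ⟨x, rfl⟩
    exact p_of_mem_C x (comap_le hx)
  refine ⟨hC.prop, codisjoint_iff_exists_add_eq.mpr fun x => ?_⟩
  refine ⟨p x, x - p x, range_le ⟨x, rfl⟩, comap_le ?_, add_sub_cancel _ _⟩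
  simp [p_of_mem_E (p x) (range_le ⟨x, rfl⟩)]

theorem exists_isCompl_of_disjoint [Module.Injective R Q] {S T : Submodule R Q}
    (hST : Disjoint S T) : ∃ E C : Submodule R Q, S ≤ E ∧ T ≤ C ∧ IsCompl E C := by
  obtain ⟨C, hTC, hC⟩ := exists_maximal_disjoint hST
  obtain ⟨E, hSE, hE⟩ := exists_maximal_disjoint hC.prop.symm
  have maximal_C : Maximal (Disjoint E) C :=
    ⟨hE.prop.symm, fun _ hD hCD => hC.le_of_ge (hD.mono_left hSE) hCD⟩
  exact ⟨E, C, hSE, hTC, isCompl_of_maximal_disjoint hE maximal_C⟩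

theorem exists_injective_embedding (M : Type (max u v)) [AddCommGroup M] [Module R M] :
    ∃ (Q : Type (max u v)) (_ : AddCommGroup Q) (_ : Module R Q) (f : M →ₗ[R] Q),
      Module.Injective R Q ∧ Function.Injective f := by
  obtain ⟨⟨Q, hQ, f, hf⟩⟩ :=
    CategoryTheory.EnoughInjectives.presentation (ModuleCat.of R M)
  exact ⟨Q, inferInstance, inferInstance, f.hom,
    (Module.injective_iff_injective_object R Q).mpr hQ, (ModuleCat.mono_iff_injective f).mp hf⟩

end Injective

section NilpotentIdeal

variable {R : Type u} [CommRing R] {I : Ideal R} {M : Type v} [AddCommGroup M] [Module R M]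

theorem submodule_induction_of_isNilpotent (hI : IsNilpotent I) {P : Submodule R M → Prop}
    (bot : P ⊥) (of_smul : ∀ K, P (I • K) → P K) (K : Submodule R M) : P K := by
  have of_pow_smul_eq_bot (n : ℕ) : ∀ K : Submodule R M, I ^ n • K = ⊥ → P K := by
    induction n with
    | zero => rintro K hK; rwa [show K = ⊥ by simpa using hK]
    | succ n ih => exact fun K hK => of_smul K (ih _ (by rwa [← Submodule.mul_smul, ← pow_succ]))
  obtain ⟨n, hn⟩ := hI
  exact of_pow_smul_eq_bot n K (by simp [hn])

theorem eq_bot_of_disjoint_torsionBySet (hI : IsNilpotent I) {K : Submodule R M}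
    (hK : Disjoint K (torsionBySet R M I)) : K = ⊥ := by
  induction K using submodule_induction_of_isNilpotent hI with
  | bot => rfl
  | of_smul K ih =>
    have smul_eq_bot : I • K = ⊥ := ih (hK.mono_left smul_le_right)
    refine hK.eq_bot_of_le fun x hx => (mem_torsionBySet_iff _ _).mpr fun a => ?_
    simpa [smul_eq_bot] using smul_mem_smul a.2 hx

theorem injective_of_injOn_torsionBySet (hI : IsNilpotent I) {N : Type*} [AddCommGroup N]
    [Module R N] {f : M →ₗ[R] N} (hf : Set.InjOn f (torsionBySet R M I)) :
    Function.Injective f :=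
  LinearMap.ker_eq_bot.mp <| eq_bot_of_disjoint_torsionBySet hI <|
    disjoint_def.mpr fun _ hfx hx => hf hx (zero_mem _) (hfx.trans (map_zero f).symm)

theorem nonempty_linearEquiv_of_torsionBySet (hI : IsNilpotent I) {N : Type v} [AddCommGroup N]
    [Module R N] [hM : Module.Injective R M] [hN : Module.Injective R N]
    (e : torsionBySet R M I ≃ₗ[R] torsionBySet R N I) : Nonempty (M ≃ₗ[R] N) := by
  obtain ⟨f, hf⟩ := hN.out (torsionBySet R M I).subtype (subtype_injective _)
    ((torsionBySet R N I).subtype ∘ₗ e.toLinearMap)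
  have f_apply (x : torsionBySet R M I) : f x = e x := hf x
  have f_injective : Function.Injective f := by
    refine injective_of_injOn_torsionBySet hI (Set.injOn_iff_injective.mpr ?_)
    have restrict_eq : (torsionBySet R M I : Set M).domRestrict f = Subtype.val ∘ e :=
      funext f_apply
    exact restrict_eq ▸ Subtype.val_injective.comp e.injective
  obtain ⟨g, hg⟩ := hM.out f f_injective LinearMap.id
  have g_apply (y : torsionBySet R N I) : g y = e.symm y := by
    simpa [f_apply] using hg (e.symm y)
  have g_injective : Function.Injective g := by
    refine injective_of_injOn_torsionBySet hI (Set.injOn_iff_injective.mpr ?_)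
    have restrict_eq : (torsionBySet R N I : Set N).domRestrict g = Subtype.val ∘ e.symm :=
      funext g_apply
    exact restrict_eq ▸ Subtype.val_injective.comp e.symm.injective
  exact ⟨.ofBijective f ⟨f_injective, fun y => ⟨g y, g_injective (hg (g y))⟩⟩⟩

end NilpotentIdeal

section TorsionCardinal

variable {R : Type u} [CommRing R] {I : Ideal R} {M : Type u} [AddCommGroup M] [Module R M]

theorem exists_mk_le_mk_smul_pow_mul_mk_inf_torsionBySet (hI : I.FG) :
    ∃ n : ℕ, ∀ K : Submodule R M, #K ≤ #↥(I • K) ^ n * #↥(K ⊓ torsionBySet R M I) := by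
  obtain ⟨G, hG⟩ := hI
  refine ⟨G.card, fun K => ?_⟩
  have smul_mem (g : G) (x : K) : (g : R) • (x : M) ∈ I • K :=
    smul_mem_smul (hG ▸ Ideal.subset_span g.2) x.2
  have torsion_eq : torsionBySet R M (I : Set R) = torsionBySet R M (G : Set R) := by
    rw [← hG, ← torsionBySet_eq_torsionBySet_span]
  let f : K →ₗ[R] G → ↥(I • K) := LinearMap.pi fun g =>
    (((g : R) • LinearMap.id).comp K.subtype).codRestrict (I • K) (smul_mem g)
  have mem_torsion_of_mem_ker (x : f.toAddMonoidHom.ker) :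
      ((x : K) : M) ∈ K ⊓ torsionBySet R M I := by
    refine ⟨(x : K).2, ?_⟩
    rw [SetLike.mem_coe, torsion_eq, mem_torsionBySet_iff]
    exact fun g => congrArg Subtype.val (congrFun x.2 g)
  have mk_ker_le : #f.toAddMonoidHom.ker ≤ #↥(K ⊓ torsionBySet R M I) :=
    Cardinal.mk_le_of_injective (f := fun x => ⟨_, mem_torsion_of_mem_ker x⟩) fun _ _ hxy =>
      Subtype.ext (Subtype.ext (Subtype.mk.inj hxy))
  calc #K ≤ #(G → ↥(I • K)) * #f.toAddMonoidHom.ker := mk_le_mk_mul_mk_ker _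
    _ = #↥(I • K) ^ G.card * #f.toAddMonoidHom.ker := by simp
    _ ≤ #↥(I • K) ^ G.card * #↥(K ⊓ torsionBySet R M I) := by gcongr

theorem exists_mk_le_mk_inf_torsionBySet_pow (hI : IsNilpotent I) (hfg : I.FG)
    (K : Submodule R M) : ∃ n : ℕ, #K ≤ #↥(K ⊓ torsionBySet R M I) ^ n := by
  obtain ⟨m, hm⟩ := exists_mk_le_mk_smul_pow_mul_mk_inf_torsionBySet (M := M) hfg
  induction K using submodule_induction_of_isNilpotent hI with
  | bot => exact ⟨0, by simp⟩
  | of_smul K ih =>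
    obtain ⟨n, hn⟩ := ih
    have smul_inf_le : I • K ⊓ torsionBySet R M I ≤ K ⊓ torsionBySet R M I :=
      inf_le_inf_right _ smul_le_right
    refine ⟨n * m + 1, ?_⟩
    calc #K ≤ #↥(I • K) ^ m * #↥(K ⊓ torsionBySet R M I) := hm K
      _ ≤ (#↥(I • K ⊓ torsionBySet R M I) ^ n) ^ m * #↥(K ⊓ torsionBySet R M I) := by gcongr
      _ ≤ (#↥(K ⊓ torsionBySet R M I) ^ n) ^ m * #↥(K ⊓ torsionBySet R M I) := by
        gcongr
        exact Cardinal.mk_le_mk_of_subset smul_inf_le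
      _ = #↥(K ⊓ torsionBySet R M I) ^ (n * m + 1) := by rw [pow_succ, pow_mul]

theorem mk_torsionBySet_eq (hI : IsNilpotent I) (hfg : I.FG) (hM : ℵ₀ ≤ #M) :
    #(torsionBySet R M I) = #M := by
  refine (Cardinal.mk_subtype_le _).antisymm (le_of_not_gt fun hlt => ?_)
  obtain ⟨n, hn⟩ := exists_mk_le_mk_inf_torsionBySet_pow hI hfg (⊤ : Submodule R M)
  have mk_top : #(⊤ : Submodule R M) = #M := Cardinal.mk_univ
  rw [top_inf_eq, mk_top] at hn
  exact (cardinal_pow_lt_of_aleph0_le hM hlt n).not_ge hn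

end TorsionCardinal

section MaximalIdeal

variable {R : Type u} [CommRing R] {I : Ideal R} [I.IsMaximal]

theorem exists_disjoint_sup_eq_torsionBySet {M : Type v} [AddCommGroup M] [Module R M]
    {S : Submodule R M} (hS : S ≤ torsionBySet R M I) :
    ∃ T, Disjoint S T ∧ S ⊔ T = torsionBySet R M I := by
  let _ : Field (R ⧸ I) := Ideal.Quotient.field I
  have : IsSemisimpleModule R (torsionBySet R M I) :=
    (torsionBySet_isTorsionBySet (R := R) (M := M) (I : Set R)).isSemisimpleModule_iff.mp
      inferInstance
  have : ComplementedLattice (Set.Iic (torsionBySet R M I)) :=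
    (mapIic _).complementedLattice_iff.mp inferInstance
  obtain ⟨T, hT⟩ := exists_isCompl (⟨S, hS⟩ : Set.Iic (torsionBySet R M I))
  obtain ⟨disjoint, sup_eq⟩ := Set.Iic.isCompl_iff.mp hT
  exact ⟨T, disjoint, sup_eq⟩

theorem exists_injective_inf_torsionBySet_eq {Q : Type v} [AddCommGroup Q] [Module R Q]
    [Module.Injective R Q] {S : Submodule R Q} (hS : S ≤ torsionBySet R Q I) :
    ∃ E : Submodule R Q, Module.Injective R E ∧ E ⊓ torsionBySet R Q I = S := by
  obtain ⟨T, disjoint, sup_eq⟩ := exists_disjoint_sup_eq_torsionBySet hS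
  obtain ⟨E, C, hSE, hTC, hEC⟩ := exists_isCompl_of_disjoint disjoint
  refine ⟨E, injective_of_isCompl_s15 hEC, ?_⟩
  calc E ⊓ torsionBySet R Q I = S ⊔ T ⊓ E := by
        rw [← sup_eq, inf_comm, sup_inf_assoc_of_le T hSE]
    _ = S := by rw [(hEC.disjoint.symm.mono_left hTC).eq_bot, sup_bot_eq]

theorem nonempty_linearEquiv_torsionBySet {M N : Type u} [AddCommGroup M] [Module R M]
    [AddCommGroup N] [Module R N] {c : Cardinal.{u}} (hc : ℵ₀ ≤ c) (hIc : #(R ⧸ I) < c)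
    (hM : #(torsionBySet R M I) = c) (hN : #(torsionBySet R N I) = c) :
    Nonempty (torsionBySet R M I ≃ₗ[R] torsionBySet R N I) := by
  let _ : Field (R ⧸ I) := Ideal.Quotient.field I
  have rank_eq : Module.rank (R ⧸ I) (torsionBySet R M I) =
      Module.rank (R ⧸ I) (torsionBySet R N I) := by
    rw [rank_eq_mk_of_mk_lt (hM ▸ hc) (hM ▸ hIc), rank_eq_mk_of_mk_lt (hN ▸ hc) (hN ▸ hIc), hM, hN]
  obtain ⟨e⟩ := nonempty_linearEquiv_of_rank_eq rank_eq
  exact ⟨e.restrictScalars R⟩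

end MaximalIdeal

theorem range_finsupp_le_torsionBySet {R : Type u} [CommRing R] {I : Ideal R} {M : Type v}
    [AddCommGroup M] [Module R M] {ι : Type*} (f : (ι →₀ R ⧸ I) →ₗ[R] M) :
    LinearMap.range f ≤ torsionBySet R M I := by
  rintro _ ⟨x, rfl⟩
  refine (mem_torsionBySet_iff _ _).mpr fun a => ?_
  have smul_eq_zero : (a : R) • x = 0 := by
    ext i
    rw [Finsupp.smul_apply, Algebra.smul_def, Ideal.Quotient.algebraMap_eq,
      Ideal.Quotient.eq_zero_iff_mem.mpr a.2, zero_mul, Finsupp.zero_apply]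
  rw [← map_smul, smul_eq_zero, map_zero]

theorem exists_injective_mk_eq {R : Type u} [CommRing R] {I : Ideal R} [I.IsMaximal]
    (hI : IsNilpotent I) (hfg : I.FG) {c : Cardinal.{u}} (hc : ℵ₀ ≤ c) (hIc : #(R ⧸ I) < c) :
    ∃ E : ModuleCat.{u} R, Module.Injective R E ∧ #E = c := by
  have : Infinite c.out := by rwa [Cardinal.infinite_iff, Cardinal.mk_out]
  have : Nontrivial (R ⧸ I) := Ideal.Quotient.nontrivial_iff.mpr Ideal.IsPrime.ne_top'
  obtain ⟨Q, _, _, f, _, hf⟩ := exists_injective_embedding.{u, u} (R := R) (c.out →₀ R ⧸ I)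
  have mk_range : #(LinearMap.range f) = c := by
    rw [← (LinearEquiv.ofInjective f hf).toEquiv.cardinal_eq, Cardinal.mk_finsupp_of_infinite,
      Cardinal.mk_out, max_eq_left hIc.le]
  obtain ⟨E, hE, hEf⟩ := exists_injective_inf_torsionBySet_eq (range_finsupp_le_torsionBySet f)
  obtain ⟨n, hn⟩ := exists_mk_le_mk_inf_torsionBySet_pow hI hfg E
  rw [hEf, mk_range] at hn
  refine ⟨.of R E, hE, (hn.trans (Cardinal.power_nat_le hc)).antisymm ?_⟩
  exact mk_range.symm.trans_le (Cardinal.mk_le_mk_of_subset (hEf.symm.trans_le inf_le_left))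

theorem stmt15_general (R : Type u) [CommRing R] [IsLocalRing R] [IsArtinianRing R]
    {c : Cardinal.{u}} (hc : ℵ₀ ≤ c) (hkc : #(ResidueField R) < c) :
    Categorical R (fun M => Module.Injective R M) c := by
  have nilpotent : IsNilpotent (maximalIdeal R) :=
    (isArtinianRing_iff_isNilpotent_maximalIdeal R).mp inferInstance
  have fg : (maximalIdeal R).FG := IsNoetherian.noetherian _
  refine ⟨exists_injective_mk_eq nilpotent fg hc hkc, fun M N _ _ hM hN => ?_⟩
  obtain ⟨e⟩ := nonempty_linearEquiv_torsionBySet (I := maximalIdeal R) hc hkc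
    ((mk_torsionBySet_eq nilpotent fg (hM ▸ hc)).trans hM)
    ((mk_torsionBySet_eq nilpotent fg (hN ▸ hc)).trans hN)
  exact nonempty_linearEquiv_of_torsionBySet nilpotent e

theorem stmt15 (R : Type u) [CommRing R] [IsLocalRing R] [IsArtinianRing R] :
    ∀ c : Cardinal.{u}, #R + ℵ₀ < c →
      Categorical R (fun M => Module.Injective R M) c := fun _ hc =>
  stmt15_general R (le_add_self.trans hc.le)
    (Cardinal.mk_quotient_le.trans_lt (le_self_add.trans_lt hc))
end

section
/- Let R be an associative ring with unity. If the class of locally injective left R-modules is λ-categorical in some cardinal λ > 2^(card(R) + ℵ₀), then R is left noetherian. -/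
/-! Statement 16: if the class of locally injective left `R`-modules is categorical in
some cardinal `> 2^(card R + ℵ₀)`, then `R` is left noetherian. -/

universe u

open Cardinal

/-- A module `M` is locally injective if every finite subset of `M` is contained in an
injective submodule of `M`. -/
def LocallyInjective (R : Type u) [Ring R] (M : Type u) [AddCommGroup M]
    [Module R M] : Prop :=
  ∀ s : Finset M, ∃ N : Submodule R M, (s : Set M) ⊆ (N : Set M) ∧ Module.Injective R N

/-! Let `J` be an injective cogenerator of size at most `2 ^ κ`, where `κ = #R + ℵ₀`. The functions
with support of size at most `κ` from a set `S` of size `(2 ^ κ)⁺` to `J` form an injective module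
`N`, of size at most `(2 ^ κ)⁺ ≤ c`. If `T` has size `c`, then `T →₀ J` and `N × (T →₀ J)` are
locally injective of size `c`, so categoricity embeds `N` into `T →₀ J`.

Let `I` be an ascending chain of left ideals. If `w n ∈ N` is killed by `I n` but not by `⨆ I`, and
the `w n` have disjoint supports in `T →₀ J`, then `x ↦ ∑ n, x • w n` is a homomorphism from `⨆ I`
to `N`. It is multiplication by an element of `N`, whose support in `T` is finite but meets the
support of every `w n`, a contradiction. Hence for some `n` and some finite `G ⊆ T`, the ideal `⨆ I`
kills every `v ∈ N` that is killed by `I n` and vanishes on `G`. By pigeonhole there are such `v` of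
the form `single s b - single t b` with `b ∈ J` any element killed by `I n`, and since `J` is a
cogenerator this gives `⨆ I = I n`. -/

theorem succ_power_le_succ_mul_power {k n : Cardinal.{u}} (hk : ℵ₀ ≤ k) (hn : n ≤ k) :
    Order.succ k ^ n ≤ Order.succ k * k ^ n := by
  induction n using Cardinal.inductionOn with | _ ι =>
  let S := (Order.succ k).ord.ToType
  have mk_S : #S = Order.succ k := by simp [S]
  have cof_S : Order.cof S = Order.succ k :=
    (Ordinal.cof_toType _).trans (isRegular_succ hk).cof_ord
  have exists_bound (f : ι → S) : ∃ a, ∀ i, f i < a := by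
    have not_cofinal : ¬ IsCofinal (Set.range f) := fun hf =>
      (Order.lt_succ k).not_ge (cof_S ▸ (Order.cof_le hf).trans (mk_range_le.trans hn))
    obtain ⟨a, ha⟩ := not_isCofinal_iff.1 not_cofinal
    exact ⟨a, fun i => ha _ ⟨i, rfl⟩⟩
  have surjective_val : Function.Surjective
      fun (p : Σ a : S, ι → Set.Iio a) (i : ι) => (p.2 i : S) := fun f =>
    let ⟨a, ha⟩ := exists_bound f
    ⟨⟨a, fun i => ⟨f i, ha i⟩⟩, rfl⟩
  have mk_Iio_le (a : S) : #(Set.Iio a) ≤ k :=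
    Order.lt_succ_iff.1 ((mk_Iio_lt a (by simp [S])).trans_eq mk_S)
  calc Order.succ k ^ #ι = #(ι → S) := by rw [← mk_S, power_def]
    _ ≤ #(Σ a : S, ι → Set.Iio a) := mk_le_of_surjective surjective_val
    _ = sum fun a : S => #(Set.Iio a) ^ #ι := by simp only [mk_sigma, power_def]
    _ ≤ sum fun _ : S => k ^ #ι := sum_le_sum _ _ fun a => power_le_power_right (mk_Iio_le a)
    _ = Order.succ k * k ^ #ι := by rw [sum_const', mk_S]

section Cogenerator

/-- `J` cogenerates the `R`-modules: homomorphisms to `J` separate the points of every module in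
the universe of `R`. -/
def IsCogenerator (R : Type u) [Ring R] (J : Type*) [AddCommGroup J] [Module R J] : Prop :=
  ∀ (M : Type u) [AddCommGroup M] [Module R M] (m : M), m ≠ 0 → ∃ φ : M →ₗ[R] J, φ m ≠ 0

theorem IsCogenerator.nontrivial {R : Type u} [Ring R] [Nontrivial R] {J : Type*} [AddCommGroup J]
    [Module R J] (hJ : IsCogenerator R J) : Nontrivial J :=
  let ⟨φ, hφ⟩ := hJ R 1 one_ne_zero
  ⟨φ 1, 0, hφ⟩

theorem IsCogenerator.exists_smul_eq_zero_and_smul_ne_zero {R : Type u} [Ring R] {J : Type*}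
    [AddCommGroup J] [Module R J] (hJ : IsCogenerator R J) {I : Ideal R} {r : R} (hr : r ∉ I) :
    ∃ b : J, (∀ x ∈ I, x • b = 0) ∧ r • b ≠ 0 := by
  obtain ⟨φ, hφ⟩ := hJ (R ⧸ I) (Submodule.Quotient.mk r) (by simpa using hr)
  have smul_apply_mk_one (x : R) :
      x • φ (Submodule.Quotient.mk 1) = φ (Submodule.Quotient.mk x) := by
    rw [← map_smul, ← Submodule.Quotient.mk_smul, smul_eq_mul, mul_one]
  refine ⟨φ (Submodule.Quotient.mk 1), fun x hx => ?_, by rwa [smul_apply_mk_one]⟩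
  rw [smul_apply_mk_one, (Submodule.Quotient.mk_eq_zero I).2 hx, map_zero]

open ModuleCat

/-- The left `R`-module `Hom_ℤ(R, ℚ/ℤ)`, an injective cogenerator; `ℚ/ℤ` is lifted to the universe
of `R`. -/
noncomputable def circleCoind (R : Type u) [Ring R] : ModuleCat.{u} R :=
  (coextendScalars (algebraMap ℤ R)).obj (of ℤ (ULift.{u} (AddCircle (1 : ℚ))))

variable (R : Type u) [Ring R]

instance : Module.Injective R (circleCoind R) := by
  have : Module.Injective ℤ (ULift.{u} (AddCircle (1 : ℚ))) :=
    (Module.Baer.of_divisible _).injective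
  have := Module.injective_object_of_injective_module ℤ (ULift.{u} (AddCircle (1 : ℚ)))
  have : CategoryTheory.Injective (of R (circleCoind R)) :=
    CategoryTheory.Injective.injective_of_adjoint (restrictCoextendScalarsAdj (algebraMap ℤ R)) _
  exact Module.injective_module_of_injective_object R _

theorem isCogenerator_circleCoind : IsCogenerator R (circleCoind R) := by
  intro M _ _ m hm
  obtain ⟨χ, hχ⟩ := CharacterModule.exists_character_apply_ne_zero_of_ne_zero hm
  let χ' : (restrictScalars (algebraMap ℤ R)).obj (of R M) ⟶ of ℤ (ULift.{u} (AddCircle (1 : ℚ))) :=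
    ofHom (X := (restrictScalars (algebraMap ℤ R)).obj (of R M))
      { toFun := fun x => ULift.up (χ x)
        map_add' := fun x y => congrArg ULift.up (map_add χ x y)
        map_smul' := fun n x => congrArg ULift.up <|
          (congrArg χ (Int.cast_smul_eq_zsmul R n (x : M))).trans (map_zsmul χ n x) }
  let φ := RestrictionCoextensionAdj.HomEquiv.fromRestriction (algebraMap ℤ R) χ'
  refine ⟨φ.hom, fun hφ => hχ ?_⟩
  have : χ' ((1 : R) • m) = 0 := congrArg (fun g => CoextendScalars.equiv _ _ g (1 : R)) hφ
  rw [one_smul] at this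
  exact congrArg ULift.down this

theorem mk_circleCoind_le : #(circleCoind R) ≤ 2 ^ (#R + ℵ₀) := by
  have : Countable (AddCircle (1 : ℚ)) := Quotient.countable
  have injective_coe : Function.Injective fun (g : circleCoind R) (x : R) =>
      CoextendScalars.equiv (algebraMap ℤ R) _ g x :=
    fun g g' h => CoextendScalars.ext (LinearMap.ext (congrFun h))
  calc #(circleCoind R) ≤ #(R → ULift.{u} (AddCircle (1 : ℚ))) := mk_le_of_injective injective_coe
    _ = #(ULift.{u} (AddCircle (1 : ℚ))) ^ #R := (power_def _ _).symm
    _ ≤ ℵ₀ ^ (#R + ℵ₀) := (power_le_power_right mk_le_aleph0).trans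
      (power_le_power_left aleph0_ne_zero le_self_add)
    _ ≤ (2 ^ (#R + ℵ₀)) ^ (#R + ℵ₀) :=
      power_le_power_right (le_add_self.trans (cantor (#R + ℵ₀)).le)
    _ = 2 ^ (#R + ℵ₀) := by rw [← power_mul, mul_eq_self le_add_self]

end Cogenerator

section BoundedSupport

theorem baer_iff_exists_smul_eq {R Q : Type*} [Ring R] [AddCommGroup Q] [Module R Q] :
    Module.Baer R Q ↔
      ∀ (I : Ideal R) (g : I →ₗ[R] Q), ∃ y : Q, ∀ x : I, (x : R) • y = g x := by
  refine forall₂_congr fun I g => ⟨fun ⟨g', hg'⟩ => ⟨g' 1, fun x => ?_⟩, fun ⟨y, hy⟩ =>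
    ⟨LinearMap.toSpanSingleton R Q y, fun x hx => hy ⟨x, hx⟩⟩⟩
  rw [← map_smul, smul_eq_mul, mul_one, hg' x x.2]

/-- The functions `S → J` whose support has cardinality at most `κ`. For `#R ≤ κ` this is an
injective module as soon as `J` is, but it is much smaller than the full power `S → J`. -/
def boundedSupport (R : Type*) [Ring R] (S J : Type u) [AddCommGroup J] [Module R J]
    {κ : Cardinal.{u}} (hκ : ℵ₀ ≤ κ) : Submodule R (S → J) where
  carrier := {f | #(Function.support f) ≤ κ}
  zero_mem' := by simp
  add_mem' {f g} hf hg :=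
    (mk_le_mk_of_subset (Function.support_add f g)).trans
      ((mk_union_le _ _).trans (add_le_of_le hκ hf hg))
  smul_mem' r f hf :=
    (mk_le_mk_of_subset (Function.support_const_smul_subset r f)).trans hf

variable {R S J : Type u} [Ring R] [AddCommGroup J] [Module R J] {κ : Cardinal.{u}} (hκ : ℵ₀ ≤ κ)

theorem baer_boundedSupport (hR : #R ≤ κ) (hJ : Module.Baer R J) :
    Module.Baer R (boundedSupport R S J hκ) := by
  classical
  refine baer_iff_exists_smul_eq.2 fun I g => ?_
  let A : Set S := ⋃ x : I, Function.support (g x : S → J)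
  have mk_A_le : #A ≤ κ := calc
    #A ≤ sum fun x : I => #(Function.support (g x : S → J)) := mk_iUnion_le_sum_mk
    _ ≤ sum fun _ : I => κ := sum_le_sum _ _ fun x => (g x).2
    _ = #I * κ := sum_const' _ _
    _ ≤ κ := mul_le_of_le hκ ((mk_subtype_le _).trans hR) le_rfl
  choose y hy using fun s : S => baer_iff_exists_smul_eq.1 hJ I
    (LinearMap.proj s ∘ₗ (boundedSupport R S J hκ).subtype ∘ₗ g)
  refine ⟨⟨A.indicator y, (mk_le_mk_of_subset Set.support_indicator_subset).trans mk_A_le⟩,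
    fun x => Subtype.ext (funext fun s => ?_)⟩
  change (x : R) • A.indicator y s = (g x : S → J) s
  by_cases hs : s ∈ A
  · rw [Set.indicator_of_mem hs]
    exact hy s x
  · rw [Set.indicator_of_notMem hs, smul_zero]
    exact (Function.notMem_support.1 fun h => hs (Set.mem_iUnion.2 ⟨x, h⟩)).symm

theorem mk_boundedSupport_le : #(boundedSupport R S J hκ) ≤ max (#S * #J) ℵ₀ ^ κ := by
  let graphOnSupport (f : boundedSupport R S J hκ) : {t : Set (S × J) // #t ≤ κ} :=
    ⟨(fun s => (s, f.1 s)) '' Function.support f.1, mk_image_le.trans f.2⟩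
  have graphOnSupport_injective : Function.Injective graphOnSupport := by
    intro f g h
    refine Subtype.ext (funext fun s => ?_)
    have mem_graphOnSupport (f : boundedSupport R S J hκ) (z : J) :
        (s, z) ∈ (graphOnSupport f).1 ↔ f.1 s = z ∧ z ≠ 0 := by
      simp only [graphOnSupport]
      aesop
    have eq_iff_eq (z : J) : f.1 s = z ∧ z ≠ 0 ↔ g.1 s = z ∧ z ≠ 0 := by
      rw [← mem_graphOnSupport, ← mem_graphOnSupport, h]
    by_cases hz : f.1 s = 0
    · exact by_contra fun hne =>
        hne ((eq_iff_eq (g.1 s)).2 ⟨rfl, fun h0 => hne (hz.trans h0.symm)⟩).1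
    · exact ((eq_iff_eq _).1 ⟨rfl, hz⟩).1.symm
  calc #(boundedSupport R S J hκ) ≤ #{t : Set (S × J) // #t ≤ κ} :=
      mk_le_of_injective graphOnSupport_injective
    _ ≤ max #(S × J) ℵ₀ ^ κ := mk_bounded_set_le _ _
    _ = max (#S * #J) ℵ₀ ^ κ := by rw [mul_def]

theorem mk_boundedSupport_le_succ (hS : #S = Order.succ (2 ^ κ)) (hJ : #J ≤ 2 ^ κ) :
    #(boundedSupport R S J hκ) ≤ Order.succ (2 ^ κ) := by
  have aleph0_le : ℵ₀ ≤ (2 : Cardinal.{u}) ^ κ := hκ.trans (cantor κ).le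
  have aleph0_le_succ := aleph0_le.trans (Order.le_succ _)
  have two_power_power : ((2 : Cardinal.{u}) ^ κ) ^ κ = 2 ^ κ := by
    rw [← power_mul, mul_eq_self hκ]
  calc #(boundedSupport R S J hκ) ≤ max (#S * #J) ℵ₀ ^ κ := mk_boundedSupport_le hκ
    _ ≤ Order.succ (2 ^ κ) ^ κ := power_le_power_right <| max_le
      (mul_le_of_le aleph0_le_succ hS.le (hJ.trans (Order.le_succ _))) aleph0_le_succ
    _ ≤ Order.succ (2 ^ κ) * 2 ^ κ :=
      (succ_power_le_succ_mul_power aleph0_le (cantor κ).le).trans_eq (by rw [two_power_power])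
    _ = Order.succ (2 ^ κ) :=
      mul_eq_left aleph0_le_succ (Order.le_succ _) (power_ne_zero _ two_ne_zero)

theorem single_mem_boundedSupport [DecidableEq S] (s : S) (b : J) :
    Pi.single s b ∈ boundedSupport R S J hκ :=
  (mk_le_mk_of_subset Pi.support_single_subset).trans
    ((mk_singleton s).trans_le (one_le_aleph0.trans hκ))

end BoundedSupport

section InjectiveIntoFinsupp

open Function

variable {R : Type*} [Ring R] {N J T : Type*} [AddCommGroup N] [Module R N] [AddCommGroup J]
  [Module R J]

theorem exists_smul_eq_finsum_smul (hN : Module.Baer R N) {ι : Type*} {I : Ideal R} {w : ι → N}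
    (hw : ∀ x ∈ I, (support fun i => x • w i).Finite) :
    ∃ y : N, ∀ x ∈ I, x • y = ∑ᶠ i, x • w i := by
  let g : I →ₗ[R] N :=
    { toFun := fun x => ∑ᶠ i, (x : R) • w i
      map_add' := fun x y => by
        simp only [← finsum_add_distrib (hw x x.2) (hw y y.2), Submodule.coe_add, add_smul]
      map_smul' := fun a x => by
        simp only [RingHom.id_apply, smul_finsum' a (hw x x.2), Submodule.coe_smul, smul_assoc] }
  obtain ⟨y, hy⟩ := baer_iff_exists_smul_eq.1 hN I g
  exact ⟨y, fun x hx => hy ⟨x, hx⟩⟩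

theorem finite_setOf_not_disjoint {ι : Type*} {F : ι → Finset T} (hF : Pairwise (Disjoint on F))
    (G : Finset T) : {i | ¬ Disjoint (F i) G}.Finite := by
  simp only [Finset.not_disjoint_iff]
  choose t htF htG using fun i : {i | ∃ t ∈ F i, t ∈ G} => i.2
  have t_injective : Injective t := fun i j hij => Subtype.ext <| by_contra fun hne =>
    Finset.disjoint_left.1 (hF hne) (htF i) (hij ▸ htF j)
  exact Finite.of_injective (fun i => (⟨t i, htG i⟩ : G)) fun i j hij =>
    t_injective (congrArg Subtype.val hij)

theorem finite_setOf_exists_smul_ne_zero (hN : Module.Baer R N) (e : N →ₗ[R] T →₀ J) {ι : Type*}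
    {I : Ideal R} {w : ι → N} (hw : ∀ x ∈ I, (support fun i => x • w i).Finite)
    (hdisj : Pairwise (Disjoint on fun i => (e (w i)).support)) :
    {i | ∃ x ∈ I, x • e (w i) ≠ 0}.Finite := by
  obtain ⟨y, hy⟩ := exists_smul_eq_finsum_smul hN hw
  refine (finite_setOf_not_disjoint hdisj (e y).support).subset ?_
  rintro i ⟨x, hx, hne⟩
  obtain ⟨t, ht⟩ := Finsupp.ne_iff.1 hne
  have ht_mem : t ∈ (e (w i)).support := Finsupp.support_smul (Finsupp.mem_support_iff.2 ht)
  have eval_smul : x • e y t = x • e (w i) t := calc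
    x • e y t = (Finsupp.lapply t ∘ₗ e) (∑ᶠ j, x • w j) := by simp [← hy x hx]
    _ = ∑ᶠ j, x • e (w j) t :=
      ((Finsupp.lapply t ∘ₗ e).toAddMonoidHom.map_finsum (hw x hx)).trans (by simp)
    _ = x • e (w i) t := finsum_eq_single _ i fun j hj => by
      rw [Finsupp.notMem_support_iff.1 (Finset.disjoint_right.1 (hdisj hj) ht_mem), smul_zero]
  refine Finset.not_disjoint_iff.2 ⟨t, ht_mem, Finsupp.mem_support_iff.2 fun h0 => ht ?_⟩
  simpa [h0] using eval_smul.symm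

theorem exists_seq_pairwise_disjoint {α : Type*} (F : α → Finset T) {P : ℕ → α → Prop}
    (h : ∀ n G, ∃ a, P n a ∧ Disjoint (F a) G) :
    ∃ w : ℕ → α, (∀ n, P n (w n)) ∧ Pairwise (Disjoint on (F ∘ w)) := by
  classical
  choose a haP haG using h
  let G : ℕ → Finset T := fun n => Nat.rec ∅ (fun n G => G ∪ F (a n G)) n
  have G_mono : Monotone G := monotone_nat_of_le_succ fun n => Finset.subset_union_left
  have disjoint_of_lt {m n : ℕ} (hmn : m < n) : Disjoint (F (a m (G m))) (F (a n (G n))) :=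
    ((haG n (G n)).mono_right (Finset.subset_union_right.trans (G_mono hmn))).symm
  exact ⟨fun n => a n (G n), fun n => haP n _, fun m n hne =>
    hne.lt_or_gt.elim disjoint_of_lt fun hnm => (disjoint_of_lt hnm).symm⟩

theorem exists_smul_eq_zero_of_disjoint_support (hN : Module.Baer R N) (e : N →ₗ[R] T →₀ J)
    (I : ℕ →o Ideal R) :
    ∃ (n : ℕ) (G : Finset T), ∀ v : N, (∀ x ∈ I n, x • v = 0) → Disjoint (e v).support G →
      ∀ x ∈ ⨆ n, I n, x • e v = 0 := by
  by_contra! h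
  obtain ⟨w, hw, hdisj⟩ := exists_seq_pairwise_disjoint (fun v => (e v).support)
    (P := fun n v => (∀ x ∈ I n, x • v = 0) ∧ ∃ x ∈ ⨆ n, I n, x • e v ≠ 0)
    fun n G => let ⟨v, hv, hvG, hx⟩ := h n G; ⟨v, ⟨hv, hx⟩, hvG⟩
  have finite_support (x : R) (hx : x ∈ ⨆ n, I n) :
      (support fun n => x • w n).Finite := by
    obtain ⟨m, hm⟩ := (Submodule.mem_iSup_of_directed I I.monotone.directed_le).1 hx
    exact (Set.finite_lt_nat m).subset fun n hn =>
      not_le.1 fun hmn => hn ((hw n).1 x (I.monotone hmn hm))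
  exact Set.infinite_univ ((finite_setOf_exists_smul_ne_zero hN e finite_support hdisj).subset
    fun n _ => (hw n).2)

end InjectiveIntoFinsupp

theorem exists_ne_forall_mem_eq {S J : Type u} {T : Type*} (hS : max #J ℵ₀ < #S) (f : S → T → J)
    (G : Finset T) : ∃ s t, s ≠ t ∧ ∀ i ∈ G, f s i = f t i := by
  have mk_lt : #(Fin G.card → J) < #S :=
    calc #(Fin G.card → J) = #J ^ G.card := by simp
      _ ≤ max #J ℵ₀ := power_nat_le_max
      _ < #S := hS
  obtain ⟨s, t, hst, hne⟩ : ∃ s t, (fun k => f s (G.equivFin.symm k)) =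
      (fun k => f t (G.equivFin.symm k)) ∧ s ≠ t := by
    by_contra! h
    exact mk_lt.not_ge (mk_le_of_injective h)
  exact ⟨s, t, hne, fun i hi => by simpa using congrFun hst (G.equivFin ⟨i, hi⟩)⟩

theorem isNoetherianRing_of_boundedSupport_injective {R : Type u} [Ring R] {S J : Type u}
    {T : Type*} [AddCommGroup J] [Module R J] {κ : Cardinal.{u}} (hκ : ℵ₀ ≤ κ) (hR : #R ≤ κ)
    (hS : max #J ℵ₀ < #S) (hJ : Module.Baer R J) (hcog : IsCogenerator R J)
    (e : boundedSupport R S J hκ →ₗ[R] T →₀ J) (he : Function.Injective e) :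
    IsNoetherianRing R := by
  classical
  refine monotone_stabilizes_iff_noetherian.1 fun I => ?_
  obtain ⟨n, G, hG⟩ := exists_smul_eq_zero_of_disjoint_support
    (baer_boundedSupport hκ hR hJ) e I
  suffices iSup_le : ⨆ m, I m ≤ I n from
    ⟨n, fun m hnm => (I.monotone hnm).antisymm ((le_iSup I m).trans iSup_le)⟩
  intro r hr
  by_contra hrn
  obtain ⟨b, hb, hrb⟩ := hcog.exists_smul_eq_zero_and_smul_ne_zero hrn
  let single (s : S) : boundedSupport R S J hκ := ⟨Pi.single s b, single_mem_boundedSupport hκ s b⟩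
  obtain ⟨s, t, hst, heq⟩ := exists_ne_forall_mem_eq hS (fun s => e (single s)) G
  have smul_single (x : R) (hx : x ∈ I n) (s : S) : x • single s = 0 :=
    Subtype.ext (by simp [single, ← Pi.single_smul, hb x hx])
  have smul_diff : r • e (single s - single t) = 0 := by
    refine hG _ (fun x hx => ?_) (Finset.disjoint_right.2 fun i hi => ?_) r hr
    · rw [smul_sub, smul_single x hx, smul_single x hx, sub_zero]
    · simpa [sub_eq_zero] using heq i hi
  rw [← map_smul, map_eq_zero_iff e he] at smul_diff
  have := congrFun (congrArg Subtype.val smul_diff) s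
  exact hrb (by simpa [single, hst] using this)

section LocallyInjective

theorem baer_prod {R A B : Type*} [Ring R] [AddCommGroup A] [Module R A] [AddCommGroup B]
    [Module R B] (hA : Module.Baer R A) (hB : Module.Baer R B) :
    Module.Baer R (A × B) :=
  fun I g =>
    let ⟨a, ha⟩ := hA I (LinearMap.fst R A B ∘ₗ g)
    let ⟨b, hb⟩ := hB I (LinearMap.snd R A B ∘ₗ g)
    ⟨a.prod b, fun x hx => Prod.ext (ha x hx) (hb x hx)⟩

variable {R : Type u} [Ring R] {A B : Type u} [AddCommGroup A] [Module R A] [AddCommGroup B]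
  [Module R B]

theorem locallyInjective_of_forall_subset_range
    (h : ∀ s : Finset A, ∃ (Q : ModuleCat.{u} R) (f : Q →ₗ[R] A), Module.Baer R Q ∧
      Function.Injective f ∧ (s : Set A) ⊆ Set.range f) : LocallyInjective R A := fun s =>
  let ⟨_, f, hQ, hf, hs⟩ := h s
  ⟨LinearMap.range f, by rwa [LinearMap.coe_range],
    (hQ.of_equiv (LinearEquiv.ofInjective f hf)).injective⟩

theorem locallyInjective_of_baer (hA : Module.Baer R A) : LocallyInjective R A :=
  locallyInjective_of_forall_subset_range fun _ =>
    ⟨ModuleCat.of R A, LinearMap.id, hA, Function.injective_id, by simp⟩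

theorem LocallyInjective.prod (hA : LocallyInjective R A) (hB : LocallyInjective R B) :
    LocallyInjective R (A × B) := by
  classical
  refine locallyInjective_of_forall_subset_range fun s => ?_
  obtain ⟨P, hsP, hP⟩ := hA (s.image Prod.fst)
  obtain ⟨Q, hsQ, hQ⟩ := hB (s.image Prod.snd)
  refine ⟨ModuleCat.of R (P × Q), P.subtype.prodMap Q.subtype,
    baer_prod (.of_injective hP) (.of_injective hQ),
    P.subtype_injective.prodMap Q.subtype_injective, fun x hx => ?_⟩
  exact ⟨(⟨x.1, hsP (Finset.mem_image_of_mem _ hx)⟩,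
    ⟨x.2, hsQ (Finset.mem_image_of_mem _ hx)⟩), rfl⟩

theorem locallyInjective_finsupp [Module.Injective R A] (T : Type u) :
    LocallyInjective R (T →₀ A) := by
  classical
  intro s
  let F : Set T := (s.biUnion Finsupp.support : Finset T)
  have : Finite F := Finset.finite_toSet _
  refine ⟨Finsupp.supported A R F, fun x hx => ?_, ?_⟩
  · exact (Finsupp.mem_supported R x).2
      (Finset.coe_subset.2 (Finset.subset_biUnion_of_mem Finsupp.support hx))
  · exact (Module.Baer.of_equiv ((Finsupp.supportedEquivFinsupp F).trans
      (Finsupp.linearEquivFunOnFinite R A F)).symm (.of_injective inferInstance)).injective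

theorem exists_injective_of_categorical_locallyInjective {c : Cardinal.{u}} (hc : ℵ₀ ≤ c)
    (hcat : Categorical R (fun M => LocallyInjective R M) c) (hA : LocallyInjective R A)
    (mk_A_le : #A ≤ c) (hB : LocallyInjective R B) (mk_B : #B = c) :
    ∃ e : A →ₗ[R] B, Function.Injective e := by
  have mk_prod : #(A × B) = c := by rw [← mul_def, mk_B, mul_eq_right hc mk_A_le (mk_ne_zero A)]
  obtain ⟨e⟩ := hcat.2 (.of R (A × B)) (.of R B) (hA.prod hB) hB mk_prod mk_B
  exact ⟨e.toLinearMap ∘ₗ LinearMap.inl R A B, e.injective.comp LinearMap.inl_injective⟩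

end LocallyInjective

theorem stmt16 (R : Type u) [Ring R]
    (h : ∃ c : Cardinal.{u}, (2 : Cardinal.{u}) ^ (#R + ℵ₀) < c ∧
      Categorical R (fun M => LocallyInjective R (M : Type u)) c) :
    IsNoetherianRing R := by
  obtain ⟨c, hc, hcat⟩ := h
  cases subsingleton_or_nontrivial R
  · infer_instance
  let J := circleCoind R
  let S := (Order.succ ((2 : Cardinal.{u}) ^ (#R + ℵ₀))).out
  have hκ : ℵ₀ ≤ #R + ℵ₀ := le_add_self
  have aleph0_le : ℵ₀ ≤ (2 : Cardinal.{u}) ^ (#R + ℵ₀) := hκ.trans (cantor _).le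
  have aleph0_le_c : ℵ₀ ≤ c := aleph0_le.trans hc.le
  have hJ : Module.Baer R J := .of_injective inferInstance
  have : Nontrivial J := (isCogenerator_circleCoind R).nontrivial
  have mk_J_le : #J ≤ 2 ^ (#R + ℵ₀) := mk_circleCoind_le R
  have : Infinite c.out := infinite_iff.2 (aleph0_le_c.trans_eq (mk_out c).symm)
  have mk_finsupp : #(c.out →₀ J) = c := by
    rw [mk_finsupp_of_infinite, mk_out, max_eq_left (mk_J_le.trans hc.le)]
  have mk_boundedSupport_le : #(boundedSupport R S J hκ) ≤ c :=
    (mk_boundedSupport_le_succ hκ (mk_out _) mk_J_le).trans (Order.succ_le_of_lt hc)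
  obtain ⟨e, he⟩ := exists_injective_of_categorical_locallyInjective aleph0_le_c hcat
    (locallyInjective_of_baer (baer_boundedSupport hκ le_self_add hJ)) mk_boundedSupport_le
    (locallyInjective_finsupp c.out) mk_finsupp
  have mk_lt_mk_S : max #J ℵ₀ < #S :=
    (max_le mk_J_le aleph0_le).trans_lt ((Order.lt_succ _).trans_eq (mk_out _).symm)
  exact isNoetherianRing_of_boundedSupport_injective hκ le_self_add mk_lt_mk_S hJ
    (isCogenerator_circleCoind R) e he
end
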